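/- arXiv:math/0605154 — 3 statements merged into one kernel-verified Lean document; each statement's English description precedes it below -/
import Mathlib

section
/- Let G be a finite simple graph, let n be even, and let A = {a_1,…,a_n} be distinct vertices such that G is noncrossing with respect to the cyclic sequence (a_1,…,a_n). For 1 ≤ i < j ≤ n let H_{ij} = G−{a_i,a_j}. If G has exactly one perfect matching, then M(G−A) = Σ_F (−1)^{χ(F)} Π_{{i,j}∈F, i<j} M(H_{ij}), the sum over all partitions F of {1,…,n} into pairs (i.e., M(G−A) equals the Pfaffian Pf(M(H_{ij}))_{1≤i<j≤n}). -/
/-- A perfect matching of the induced subgraph of `G` on the vertex set `s`,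
represented as a set `m` of edges of `G`: every edge of `m` is an edge of `G`
with both endpoints in `s`, and every vertex of `s` lies in exactly one edge of `m`. -/
def IsPMOn {α : Type*} (G : SimpleGraph α) (s : Finset α) (m : Finset (Sym2 α)) : Prop :=
  (∀ e ∈ m, e ∈ G.edgeSet ∧ ∀ v ∈ e, v ∈ s) ∧ ∀ v ∈ s, ∃! e, e ∈ m ∧ v ∈ e

/-- The number of perfect matchings of the induced subgraph of `G` on `s`. -/
noncomputable def pmCount {α : Type*} (G : SimpleGraph α) (s : Finset α) : ℕ :=
  Nat.card {m : Finset (Sym2 α) // IsPMOn G s m}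

open Classical in
/-- The sum, over all perfect matchings of the induced subgraph of `G` on `s`,
of the product of the weights of the edges of the matching. -/
noncomputable def pmSum {α R : Type*} [Fintype α] [DecidableEq α] [CommRing R]
    (G : SimpleGraph α) (w : Sym2 α → R) (s : Finset α) : R :=
  ∑ m ∈ Finset.univ.filter (fun m : Finset (Sym2 α) => IsPMOn G s m), ∏ e ∈ m, w e

/-- There are two vertex-disjoint paths in `G`, one joining `x₁` to `y₁` and one joining
`x₂` to `y₂`, whose internal vertices avoid `S`. -/
def DisjointPaths {α : Type*} (G : SimpleGraph α) (S : Set α) (x₁ y₁ x₂ y₂ : α) : Prop :=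
  ∃ (p : G.Walk x₁ y₁) (q : G.Walk x₂ y₂), p.IsPath ∧ q.IsPath ∧
    (∀ u ∈ p.support, u ∉ q.support) ∧
    (∀ u ∈ p.support, u ≠ x₁ → u ≠ y₁ → u ∉ S) ∧
    (∀ u ∈ q.support, u ≠ x₂ → u ≠ y₂ → u ∉ S)

/-- `G` is noncrossing with respect to the cyclic sequence given by the list `L`:
there are no indices `i < j < k < l` such that `G` contains two vertex-disjoint paths,
one joining `L[i]` to `L[k]` and one joining `L[j]` to `L[l]`, whose internal vertices
avoid the vertices of `L`. -/
def NoncrossingList {α : Type*} (G : SimpleGraph α) (L : List α) : Prop :=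
  ∀ i j k l : Fin L.length, i < j → j < k → k < l →
    ¬ DisjointPaths G {x | x ∈ L} (L.get i) (L.get k) (L.get j) (L.get l)

/-- `U, W` form a bipartition of the vertices of `G`. -/
def IsBipartition {α : Type*} [Fintype α] [DecidableEq α]
    (G : SimpleGraph α) (U W : Finset α) : Prop :=
  Disjoint U W ∧ U ∪ W = Finset.univ ∧
    ∀ ⦃x y⦄, G.Adj x y → ((x ∈ U ∧ y ∈ W) ∨ (x ∈ W ∧ y ∈ U))

/-- `P` is an `MH`-alternating path, where `MH` is the unique perfect matching of the
induced subgraph of `G` on the vertex set `sH`: `P` is a (nontrivial) path, among any two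
consecutive edges of `P` exactly one lies in `MH`, and for each endpoint the incident edge
of `P` lies in `MH` iff the endpoint belongs to `sH`. -/
def IsAltPath {α : Type*} (G : SimpleGraph α) (sH : Finset α) (MH : Finset (Sym2 α))
    {x y : α} (P : G.Walk x y) : Prop :=
  P.IsPath ∧ P.edges ≠ [] ∧
  P.edges.Chain' (fun e f => e ∈ MH ↔ f ∉ MH) ∧
  (∀ e ∈ P.edges.head?, (e ∈ MH ↔ x ∈ sH)) ∧
  (∀ e ∈ P.edges.getLast?, (e ∈ MH ↔ y ∈ sH))

/-- A family of pairwise vertex-disjoint `MH`-alternating paths in `G` whose set of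
path-endpoints is exactly `A`, each vertex of `A` being an endpoint of exactly one
path of the family. -/
def IsAltPathNest {α : Type*} (G : SimpleGraph α) (sH : Finset α) (MH : Finset (Sym2 α))
    (A : Finset α) (F : Finset (Σ x : α, Σ y : α, G.Walk x y)) : Prop :=
  (∀ p ∈ F, IsAltPath G sH MH p.2.2) ∧
  (∀ p ∈ F, ∀ q ∈ F, p ≠ q → ∀ u ∈ p.2.2.support, u ∉ q.2.2.support) ∧
  (∀ p ∈ F, p.1 ∈ A ∧ p.2.1 ∈ A) ∧
  (∀ v ∈ A, ∃! p, p ∈ F ∧ (v = p.1 ∨ v = p.2.1))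

/-- A 1-factor on `{1, …, n}`: a partition of `Fin n` into pairs, each pair recorded
as an ordered pair `(i, j)` with `i < j`. -/
def IsOneFactor (n : ℕ) (F : Finset (Fin n × Fin n)) : Prop :=
  (∀ p ∈ F, p.1 < p.2) ∧ ∀ v : Fin n, ∃! p, p ∈ F ∧ (v = p.1 ∨ v = p.2)

/-- The crossing number of a 1-factor: the number of pairs of pairs
`(i,j), (k,l)` in `F` with `i < k < j < l`. -/
def crossingNumber (n : ℕ) (F : Finset (Fin n × Fin n)) : ℕ :=
  ((F ×ˢ F).filter (fun q => q.1.1 < q.2.1 ∧ q.2.1 < q.1.2 ∧ q.1.2 < q.2.2)).card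

/-!
Write `A_T` for the set of terminals `a_j` with `j ∈ T`. Superpose a perfect matching of
`G - {a_i, a_j}` with one of `G - (A_S \ {a_i, a_j})`, for `i, j ∈ S` (for `j = i`: a matching of
`G` with one of `G - A_S`). The union consists of cycles, double edges and paths, and the paths join
the terminals of `A_S` in pairs. Swapping the two matchings along the path from `a_j` to `a_k`
replaces `j` by `k`. Since `G` is noncrossing, the terminals strictly between `a_j` and `a_k` are
joined among themselves, so the positions of `j` and `k` in `S` have opposite parity: the swap is a
sign-reversing involution, and the alternating sum over `j ∈ S` of
`M(G - {a_i, a_j}) M(G - (A_S \ {a_i, a_j}))` vanishes. With `i = min S` this is the expansion of a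
Pfaffian along its first row, and induction on `|S|` gives `M(G) ^ (n/2) M(G - A) = M(G) Pf`.
-/

open Function
open scoped symmDiff Finset

section MatchingInvolution

variable {α : Type*} {G : SimpleGraph α} {s : Finset α} {D : Set α} {σ τ : α → α}

/-- A perfect matching of `G - D`, encoded as the involution of the whole vertex set that exchanges
matched vertices and fixes exactly the vertices of `D`. -/
structure IsMatchingInvolution (G : SimpleGraph α) (D : Set α) (σ : α → α) : Prop where
  involutive : Involutive σ
  adj : ∀ x, σ x ≠ x → G.Adj x (σ x)
  apply_eq_self_iff : ∀ x, σ x = x ↔ x ∈ D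

namespace IsMatchingInvolution

theorem adj_of_mem (hσ : IsMatchingInvolution G (↑s)ᶜ σ) {x : α} (hx : x ∈ s) : G.Adj x (σ x) :=
  hσ.adj x fun h ↦ (hσ.apply_eq_self_iff x).1 h hx

theorem apply_mem (hσ : IsMatchingInvolution G (↑s)ᶜ σ) {x : α} (hx : x ∈ s) : σ x ∈ s := by
  by_contra hσx
  have hfix : σ (σ x) = σ x := (hσ.apply_eq_self_iff _).2 hσx
  exact (hσ.adj_of_mem hx).ne ((hσ.involutive x).symm.trans hfix)

theorem isPMOn_image [DecidableEq α] (hσ : IsMatchingInvolution G (↑s)ᶜ σ) :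
    IsPMOn G s (s.image fun v ↦ s(v, σ v)) := by
  constructor
  · simp only [Finset.forall_mem_image, Sym2.mem_iff, forall_eq_or_imp, forall_eq]
    exact fun v hv ↦ ⟨hσ.adj_of_mem hv, hv, hσ.apply_mem hv⟩
  · refine fun v hv ↦ ⟨s(v, σ v), ⟨Finset.mem_image_of_mem _ hv, Sym2.mem_mk_left _ _⟩, ?_⟩
    rintro e ⟨he, hve⟩
    obtain ⟨u, -, rfl⟩ := Finset.mem_image.1 he
    rcases Sym2.mem_iff.1 hve with rfl | rfl
    · rfl
    · rw [hσ.involutive, Sym2.eq_swap]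

theorem eq_of_image_eq [DecidableEq α] (hσ : IsMatchingInvolution G (↑s)ᶜ σ)
    (hτ : IsMatchingInvolution G (↑s)ᶜ τ)
    (h : (s.image fun v ↦ s(v, σ v)) = s.image fun v ↦ s(v, τ v)) : σ = τ := by
  ext x
  by_cases hx : x ∈ s
  · have hmem : s(x, σ x) ∈ s.image fun v ↦ s(v, τ v) := h ▸ Finset.mem_image_of_mem _ hx
    obtain ⟨u, -, hu⟩ := Finset.mem_image.1 hmem
    rcases Sym2.eq_iff.1 hu with ⟨rfl, hτu⟩ | ⟨rfl, hτu⟩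
    · exact hτu.symm
    · rw [← hτ.involutive (σ x), hτu]
  · rw [(hσ.apply_eq_self_iff x).2 hx, (hτ.apply_eq_self_iff x).2 hx]

end IsMatchingInvolution

theorem IsPMOn.exists_isMatchingInvolution [DecidableEq α] {m : Finset (Sym2 α)}
    (hm : IsPMOn G s m) :
    ∃ σ, IsMatchingInvolution G (↑s)ᶜ σ ∧ (s.image fun v ↦ s(v, σ v)) = m := by
  have hmate : ∀ v, ∃ u, (v ∈ s → s(v, u) ∈ m) ∧ (v ∉ s → u = v) := by
    intro v
    by_cases hv : v ∈ s
    · obtain ⟨_, ⟨he, u, rfl⟩, -⟩ := hm.2 v hv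
      exact ⟨u, fun _ ↦ he, fun h ↦ absurd hv h⟩
    · exact ⟨v, fun h ↦ absurd h hv, fun _ ↦ rfl⟩
  choose σ hσm hσfix using hmate
  have hadj : ∀ v ∈ s, G.Adj v (σ v) := fun v hv ↦ (hm.1 _ (hσm v hv)).1
  have hmaps : ∀ v ∈ s, σ v ∈ s := fun v hv ↦ (hm.1 _ (hσm v hv)).2 _ (Sym2.mem_mk_right _ _)
  have hedge : ∀ v ∈ s, ∀ e ∈ m, v ∈ e → e = s(v, σ v) := fun v hv e he hve ↦
    (hm.2 v hv).unique ⟨he, hve⟩ ⟨hσm v hv, Sym2.mem_mk_left _ _⟩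
  refine ⟨σ, ⟨fun x ↦ ?_, fun x hx ↦ ?_, fun x ↦ ⟨fun h hx ↦ ?_, hσfix x⟩⟩, ?_⟩
  · by_cases hx : x ∈ s
    · have := hedge (σ x) (hmaps x hx) s(x, σ x) (hσm x hx) (Sym2.mem_mk_right _ _)
      rcases Sym2.eq_iff.1 this with ⟨h, -⟩ | ⟨h, -⟩
      · exact absurd h (hadj x hx).ne
      · exact h.symm
    · rw [hσfix x hx, hσfix x hx]
  · exact hadj x (by_contra fun h ↦ hx (hσfix x h))
  · exact (hadj x hx).ne h.symm
  · ext e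
    refine ⟨fun he ↦ ?_, fun he ↦ ?_⟩
    · obtain ⟨v, hv, rfl⟩ := Finset.mem_image.1 he
      exact hσm v hv
    · have hfst : e.out.1 ∈ s := (hm.1 e he).2 _ e.out_fst_mem
      exact Finset.mem_image.2 ⟨_, hfst, (hedge _ hfst e he e.out_fst_mem).symm⟩

theorem pmCount_eq_card_isMatchingInvolution (G : SimpleGraph α) (s : Finset α) :
    pmCount G s = Nat.card {σ : α → α // IsMatchingInvolution G (↑s)ᶜ σ} := by
  classical
  symm
  refine Nat.card_eq_of_bijective
    (fun σ ↦ ⟨s.image fun v ↦ s(v, σ.1 v), σ.2.isPMOn_image⟩) ⟨fun σ τ h ↦ ?_, fun m ↦ ?_⟩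
  · exact Subtype.ext (σ.2.eq_of_image_eq τ.2 (congrArg Subtype.val h))
  · obtain ⟨σ, hσ, hσm⟩ := m.2.exists_isMatchingInvolution
    exact ⟨⟨σ, hσ⟩, Subtype.ext hσm⟩

theorem pmCount_eq_one_iff : pmCount G s = 1 ↔ ∃! m, IsPMOn G s m := by
  rw [pmCount, Nat.card_eq_one_iff_unique, ← unique_iff_subsingleton_and_nonempty,
    unique_subtype_iff_existsUnique]

end MatchingInvolution

section Superposition

variable {α : Type*} {σ τ : α → α} {x y : α}

/-- The graph whose edges are the orbits `{x, σ x}` and `{x, τ x}`; for two matching involutions it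
is the union of the two matchings. -/
def superposition (σ τ : α → α) : SimpleGraph α :=
  SimpleGraph.fromRel fun x y ↦ y = σ x ∨ y = τ x

theorem superposition_comm (σ τ : α → α) : superposition σ τ = superposition τ σ := by
  ext x y
  simp only [superposition, SimpleGraph.fromRel_adj]
  tauto

theorem superposition_adj (hσ : Involutive σ) (hτ : Involutive τ) :
    (superposition σ τ).Adj x y ↔ x ≠ y ∧ (y = σ x ∨ y = τ x) := by
  simp only [superposition, SimpleGraph.fromRel_adj]
  grind [hσ x, hσ y, hτ x, hτ y]

theorem superposition_reachable_left (σ τ : α → α) (x : α) :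
    (superposition σ τ).Reachable x (σ x) := by
  by_cases h : x = σ x
  · rw [← h]
  · exact SimpleGraph.Adj.reachable (by simp [superposition, h])

theorem superposition_reachable_right (σ τ : α → α) (x : α) :
    (superposition σ τ).Reachable x (τ x) :=
  superposition_comm τ σ ▸ superposition_reachable_left τ σ x

theorem IsMatchingInvolution.superposition_le {G : SimpleGraph α} {D E : Set α}
    (hσ : IsMatchingInvolution G D σ) (hτ : IsMatchingInvolution G E τ) :
    superposition σ τ ≤ G := by
  intro x y hxy
  obtain ⟨hne, rfl | rfl⟩ := (superposition_adj hσ.involutive hτ.involutive).1 hxy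
  · exact hσ.adj x hne.symm
  · exact hτ.adj x hne.symm

end Superposition

section Partner

variable {α : Type*} {σ τ : α → α} {x y : α}

/-- Two steps along the path or cycle of `superposition σ τ` through a vertex. -/
def twoStep (hσ : Involutive σ) (hτ : Involutive τ) : Equiv.Perm α :=
  hσ.toPerm * hτ.toPerm

theorem apply_twoStep_zpow_left (hσ : Involutive σ) (hτ : Involutive τ) (hx : σ x = x) (m : ℤ) :
    σ ((twoStep hσ hτ ^ m) x) = (twoStep hσ hτ ^ (-m)) x := by
  have hconj : SemiconjBy hσ.toPerm (twoStep hσ hτ) (twoStep hσ hτ)⁻¹ := by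
    ext y
    simp [twoStep, hσ (τ y)]
  simpa [hx] using congrArg (· x) (hconj.zpow_right m)

theorem apply_twoStep_zpow_right (hσ : Involutive σ) (hτ : Involutive τ) (hx : σ x = x) (m : ℤ) :
    τ ((twoStep hσ hτ ^ m) x) = (twoStep hσ hτ ^ (-(m + 1))) x := by
  rw [← apply_twoStep_zpow_left hσ hτ hx, add_comm, zpow_one_add]
  exact (hσ _).symm

theorem reachable_twoStep_pow (hσ : Involutive σ) (hτ : Involutive τ) (x : α) (c : ℕ) :
    (superposition σ τ).Reachable x ((twoStep hσ hτ ^ c) x) := by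
  induction c with
  | zero => rfl
  | succ c ih =>
    rw [pow_succ']
    exact ih.trans ((superposition_reachable_right σ τ _).trans
      (superposition_reachable_left σ τ _))

theorem exists_twoStep_zpow_of_reachable (hσ : Involutive σ) (hτ : Involutive τ) (hx : σ x = x)
    (hxy : (superposition σ τ).Reachable x y) : ∃ m : ℤ, (twoStep hσ hτ ^ m) x = y := by
  rw [SimpleGraph.reachable_iff_reflTransGen] at hxy
  induction hxy with
  | refl => exact ⟨0, rfl⟩
  | tail _ hadj ih =>
    obtain ⟨m, rfl⟩ := ih
    obtain ⟨-, rfl | rfl⟩ := (superposition_adj hσ hτ).1 hadj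
    · exact ⟨-m, (apply_twoStep_zpow_left hσ hτ hx m).symm⟩
    · exact ⟨-(m + 1), (apply_twoStep_zpow_right hσ hτ hx m).symm⟩

theorem perm_zpow_apply_eq_zpow_apply_iff (r : Equiv.Perm α) (x : α) (m k : ℤ) :
    (r ^ m) x = (r ^ k) x ↔ (minimalPeriod r x : ℤ) ∣ m - k := by
  have hperiod : (r ^ (m - k)) x = x ↔ (minimalPeriod r x : ℤ) ∣ m - k :=
    MulAction.zpow_smul_eq_iff_minimalPeriod_dvd (a := r) (b := x)
  rw [← hperiod, sub_eq_neg_add, zpow_add, Equiv.Perm.mul_apply, zpow_neg,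
    Equiv.Perm.inv_eq_iff_eq]

theorem two_mul_dvd_sub_iff {c : ℤ} (hc : c ≠ 0) (m : ℤ) :
    2 * c ∣ m - c ↔ ¬ 2 * c ∣ m ∧ (2 * c ∣ 2 * m ∨ 2 * c ∣ 2 * m + 1) := by
  have hodd : ¬ 2 * c ∣ 2 * m + 1 := fun h ↦ by
    have := (dvd_mul_right 2 c).trans h
    omega
  rw [or_iff_left hodd, mul_dvd_mul_iff_left two_ne_zero]
  constructor
  · rintro ⟨d, hd⟩
    obtain rfl : m = c * (2 * d + 1) := by linarith
    rw [mul_comm 2, mul_dvd_mul_iff_left hc]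
    exact ⟨by omega, dvd_mul_right _ _⟩
  · rintro ⟨hndvd, d, rfl⟩
    rw [mul_comm 2, mul_dvd_mul_iff_left hc] at hndvd
    obtain ⟨e, rfl⟩ : Odd d := by rwa [← Int.not_even_iff_odd, even_iff_two_dvd]
    exact ⟨e, by ring⟩

theorem two_mul_add_one_dvd_sub_iff {c : ℤ} (hc : 0 < c) (m : ℤ) :
    2 * c + 1 ∣ m - c ↔ ¬ 2 * c + 1 ∣ m ∧ (2 * c + 1 ∣ 2 * m ∨ 2 * c + 1 ∣ 2 * m + 1) := by
  have hcop : IsCoprime (2 * c + 1) 2 := ⟨1, -c, by ring⟩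
  have heven : 2 * c + 1 ∣ 2 * m ↔ 2 * c + 1 ∣ m :=
    ⟨hcop.dvd_of_dvd_mul_left, fun h ↦ h.mul_left 2⟩
  have hodd : 2 * c + 1 ∣ 2 * m + 1 ↔ 2 * c + 1 ∣ m - c := by
    rw [← dvd_sub_self_right, show 2 * m + 1 - (2 * c + 1) = 2 * (m - c) by ring]
    exact ⟨hcop.dvd_of_dvd_mul_left, fun h ↦ h.mul_left 2⟩
  have hndvd : ¬ 2 * c + 1 ∣ c := fun h ↦ by
    have := Int.le_of_dvd hc h
    omega
  have hexcl : 2 * c + 1 ∣ m - c → ¬ 2 * c + 1 ∣ m := fun h hm ↦ hndvd ((dvd_sub_right hm).1 h)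
  rw [heven, hodd]
  tauto

theorem dvd_sub_half_iff {N : ℕ} (hN : 2 ≤ N) (m : ℤ) :
    (N : ℤ) ∣ m - (N / 2 : ℕ) ↔ ¬ (N : ℤ) ∣ m ∧ ((N : ℤ) ∣ 2 * m ∨ (N : ℤ) ∣ 2 * m + 1) := by
  obtain ⟨c, rfl | rfl⟩ := Nat.even_or_odd' N
  · rw [Nat.mul_div_cancel_left c two_pos]
    exact_mod_cast two_mul_dvd_sub_iff (c := c) (by omega) m
  · rw [show (2 * c + 1) / 2 = c by omega]
    exact_mod_cast two_mul_add_one_dvd_sub_iff (c := c) (by omega) m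

-- On the orbit `m ↦ r ^ m x ≅ ℤ / N` the two involutions are `m ↦ -m` and `m ↦ -(m + 1)`.
theorem existsUnique_reachable_fixed [Finite α] (hσ : Involutive σ) (hτ : Involutive τ)
    (hx : σ x = x) (hτx : τ x ≠ x) :
    ∃! y, y ≠ x ∧ (superposition σ τ).Reachable x y ∧ (σ y = y ∨ τ y = y) := by
  set r := twoStep hσ hτ
  set N := minimalPeriod r x with hN
  have hfix : ∀ m : ℤ, ((r ^ m) x ≠ x ∧ (σ ((r ^ m) x) = (r ^ m) x ∨ τ ((r ^ m) x) = (r ^ m) x)) ↔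
      ¬ (N : ℤ) ∣ m ∧ ((N : ℤ) ∣ 2 * m ∨ (N : ℤ) ∣ 2 * m + 1) := by
    intro m
    have h0 : (r ^ m) x = x ↔ (N : ℤ) ∣ m := by
      simpa using perm_zpow_apply_eq_zpow_apply_iff r x m 0
    rw [apply_twoStep_zpow_left hσ hτ hx, apply_twoStep_zpow_right hσ hτ hx,
      perm_zpow_apply_eq_zpow_apply_iff, perm_zpow_apply_eq_zpow_apply_iff, Ne, h0,
      show -m - m = -(2 * m) by ring, show -(m + 1) - m = -(2 * m + 1) by ring, dvd_neg, dvd_neg]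
  have hN2 : 2 ≤ N := by
    have hpos : 0 < N := minimalPeriod_pos_of_mem_periodicPts (r.injective.mem_periodicPts x)
    have hne : N ≠ 1 := by
      rw [hN, Ne, minimalPeriod_eq_one_iff_isFixedPt]
      exact fun h ↦ hτx ((hσ.eq_iff.1 h).trans hx)
    omega
  refine ⟨(r ^ (N / 2)) x, ?_, ?_⟩
  · have := (hfix (N / 2 : ℕ)).2 ((dvd_sub_half_iff hN2 _).1 (by simp))
    rw [zpow_natCast] at this
    exact ⟨this.1, reachable_twoStep_pow hσ hτ x _, this.2⟩
  · rintro y ⟨hyx, hreach, hy⟩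
    obtain ⟨m, rfl⟩ := exists_twoStep_zpow_of_reachable hσ hτ hx hreach
    rw [← zpow_natCast, perm_zpow_apply_eq_zpow_apply_iff, dvd_sub_half_iff hN2, ← hfix]
    exact ⟨hyx, hy⟩

end Partner


section Noncrossing

variable {α : Type*} {G : SimpleGraph α}

theorem exists_path_of_walk_between {P Q : Set α} {u v : α} (hu : u ∈ P) (hv : v ∈ Q)
    (p : G.Walk u v) :
    ∃ u' ∈ P, ∃ v' ∈ Q, ∃ p' : G.Walk u' v', p'.IsPath ∧ p'.support ⊆ p.support ∧
      ∀ x ∈ p'.support, x ≠ u' → x ≠ v' → x ∉ P ∪ Q := by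
  classical
  induction hlen : p.length using Nat.strong_induction_on generalizing u v with
  | _ N ih =>
  by_cases hinner : ∃ x ∈ p.support, x ≠ u ∧ x ≠ v ∧ x ∈ P ∪ Q
  · obtain ⟨x, hx, hxu, hxv, hxP | hxQ⟩ := hinner
    · obtain ⟨u', hu', v', hv', p', hp', hsub, hint⟩ :=
        ih _ (hlen ▸ p.length_dropUntil_lt_length hx hxu) hxP hv (p.dropUntil x hx) rfl
      exact ⟨u', hu', v', hv', p', hp',
        List.Subset.trans hsub (p.support_dropUntil_subset_support hx), hint⟩
    · obtain ⟨u', hu', v', hv', p', hp', hsub, hint⟩ :=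
        ih _ (hlen ▸ p.length_takeUntil_lt_length hx hxv) hu hxQ (p.takeUntil x hx) rfl
      exact ⟨u', hu', v', hv', p', hp',
        List.Subset.trans hsub (p.support_takeUntil_subset_support hx), hint⟩
  · have hsub := p.support_bypass_subset_support
    exact ⟨u, hu, v, hv, p.bypass, p.bypass_isPath, hsub,
      fun x hx hxu hxv hxPQ ↦ hinner ⟨x, hsub hx, hxu, hxv, hxPQ⟩⟩

theorem DisjointPaths.reverse_left {S : Set α} {x y z w : α} (h : DisjointPaths G S x y z w) :
    DisjointPaths G S y x z w := by
  obtain ⟨p, q, hp, hq, hdisj, hpS, hqS⟩ := h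
  exact ⟨p.reverse, q, hp.reverse, hq, by simpa using hdisj,
    fun u hu huy hux ↦ hpS u (by simpa using hu) hux huy, hqS⟩

theorem DisjointPaths.swap {S : Set α} {x y z w : α} (h : DisjointPaths G S x y z w) :
    DisjointPaths G S z w x y := by
  obtain ⟨p, q, hp, hq, hdisj, hpS, hqS⟩ := h
  exact ⟨q, p, hq, hp, fun u huq hup ↦ hdisj u hup huq, hqS, hpS⟩

variable {n : ℕ} {a : Fin n → α} {i j k l : Fin n}

theorem NoncrossingList.not_disjointPaths_of_lt (hnc : NoncrossingList G (List.ofFn a))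
    (hij : i < j) (hjk : j < k) (hkl : k < l) :
    ¬ DisjointPaths G (Set.range a) (a i) (a k) (a j) (a l) := by
  have hlen : n = (List.ofFn a).length := List.length_ofFn.symm
  have hrange : {x | x ∈ List.ofFn a} = Set.range a := by ext x; simp [List.mem_ofFn]
  have hcast := hnc (i.cast hlen) (j.cast hlen) (k.cast hlen) (l.cast hlen) hij hjk hkl
  rw [hrange] at hcast
  simpa using hcast

theorem NoncrossingList.not_disjointPaths (hnc : NoncrossingList G (List.ofFn a))
    (hj : j ∈ Set.uIoo i k) (hl : l ∉ Set.uIcc i k) :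
    ¬ DisjointPaths G (Set.range a) (a i) (a k) (a j) (a l) := by
  intro hpaths
  wlog hik : i ≤ k generalizing i k
  · exact this (Set.uIoo_comm i k ▸ hj) (Set.uIcc_comm i k ▸ hl) hpaths.reverse_left
      (le_of_not_ge hik)
  rw [Set.uIoo_of_le hik] at hj
  rw [Set.uIcc_of_le hik, Set.mem_Icc, not_and_or, not_le, not_le] at hl
  rcases hl with hli | hkl
  · exact hnc.not_disjointPaths_of_lt hli hj.1 hj.2 hpaths.swap.reverse_left
  · exact hnc.not_disjointPaths_of_lt hj.1 hj.2 hkl hpaths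

theorem exists_path_interlacing (hj : j ∈ Set.uIoo i k) (hl : l ∉ Set.uIcc i k)
    (q : G.Walk (a j) (a l)) (hi : a i ∉ q.support) (hk : a k ∉ q.support) :
    ∃ j' ∈ Set.uIoo i k, ∃ l' ∉ Set.uIcc i k, ∃ q' : G.Walk (a j') (a l'),
      q'.IsPath ∧ q'.support ⊆ q.support ∧
        ∀ x ∈ q'.support, x ≠ a j' → x ≠ a l' → x ∉ Set.range a := by
  obtain ⟨_, ⟨j', hj', rfl⟩, _, ⟨l', hl', rfl⟩, q', hpath, hsub, hint⟩ :=
    exists_path_of_walk_between (P := a '' Set.uIoo i k) (Q := a '' (Set.uIcc i k)ᶜ)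
      (Set.mem_image_of_mem a hj) (Set.mem_image_of_mem a hl) q
  refine ⟨j', hj', l', hl', q', hpath, hsub, ?_⟩
  rintro _ hx hxj hxl ⟨m, rfl⟩
  have hmi : m ≠ i := by rintro rfl; exact hi (hsub hx)
  have hmk : m ≠ k := by rintro rfl; exact hk (hsub hx)
  refine hint _ hx hxj hxl ((Set.image_union a _ _).subset (Set.mem_image_of_mem a ?_))
  simp only [Set.uIoo, Set.uIcc, Set.mem_union, Set.mem_Ioo, Set.mem_compl_iff, Set.mem_Icc]
  grind

theorem mem_uIoo_and_notMem_uIcc_symm {ι : Type*} [LinearOrder ι] {i j k l : ι}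
    (hj : j ∈ Set.uIoo i k) (hl : l ∉ Set.uIcc i k) :
    i ∈ Set.uIoo j l ∧ k ∉ Set.uIcc j l ∨ k ∈ Set.uIoo j l ∧ i ∉ Set.uIcc j l := by
  simp only [Set.uIoo, Set.uIcc, Set.mem_Ioo, Set.mem_Icc] at *
  grind

-- Unlike in `NoncrossingList`, the walks may pass through other terminals: cutting each of them
-- there leaves a piece whose ends still interlace the ends of the other walk.
theorem NoncrossingList.not_disjoint_support (hnc : NoncrossingList G (List.ofFn a))
    (hj : j ∈ Set.uIoo i k) (hl : l ∉ Set.uIcc i k)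
    (p : G.Walk (a i) (a k)) (q : G.Walk (a j) (a l)) : ¬ p.support.Disjoint q.support := by
  intro hdisj
  obtain ⟨j', hj', l', hl', q', hq', hq'sub, hq'int⟩ :=
    exists_path_interlacing hj hl q (hdisj p.start_mem_support) (hdisj p.end_mem_support)
  replace hdisj : p.support.Disjoint q'.support := fun u hu hu' ↦ hdisj hu (hq'sub hu')
  clear hj hl hq'sub
  wlog hi : i ∈ Set.uIoo j' l' ∧ k ∉ Set.uIcc j' l' generalizing i k
  · have hk := (mem_uIoo_and_notMem_uIcc_symm hj' hl').resolve_left hi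
    exact this p.reverse (Set.uIoo_comm i k ▸ hj') (Set.uIcc_comm i k ▸ hl')
      (by simpa [List.Disjoint] using hdisj) hk
  obtain ⟨i', hi', k', hk', p', hp', hp'sub, hp'int⟩ := exists_path_interlacing hi.1 hi.2 p
    (fun h ↦ hdisj h q'.start_mem_support) (fun h ↦ hdisj h q'.end_mem_support)
  exact hnc.not_disjointPaths hi' hk' ⟨q', p', hq', hp', fun u hu hu' ↦ hdisj (hp'sub hu') hu,
    hq'int, hp'int⟩

theorem NoncrossingList.reachable_of_interlacing (hnc : NoncrossingList G (List.ofFn a))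
    {H : SimpleGraph α} (hH : H ≤ G) (hj : j ∈ Set.uIoo i k) (hl : l ∉ Set.uIcc i k)
    (hik : H.Reachable (a i) (a k)) (hjl : H.Reachable (a j) (a l)) :
    H.Reachable (a i) (a j) := by
  classical
  obtain ⟨p⟩ := hik
  obtain ⟨q⟩ := hjl
  by_contra hij
  refine hnc.not_disjoint_support hj hl (p.mapLe hH) (q.mapLe hH) fun u hup huq ↦ hij ?_
  rw [SimpleGraph.Walk.support_mapLe_eq_support] at hup huq
  exact (p.takeUntil u hup).reachable.trans (q.takeUntil u huq).reachable.symm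

end Noncrossing

section PairedTerminals

variable {α ι : Type*} {H : SimpleGraph α} {a : ι → α} {S : Finset ι} {j k : ι}

/-- Every component of `H` that contains a terminal `a j` with `j ∈ S` contains exactly two of
them. -/
def PairsTerminals (H : SimpleGraph α) (a : ι → α) (S : Finset ι) : Prop :=
  ∀ j ∈ S, ∃! k, k ∈ S ∧ k ≠ j ∧ H.Reachable (a j) (a k)

open Classical in
/-- The index of the other terminal in the component of `a j`, or `j` itself if there is none. -/
noncomputable def partner (H : SimpleGraph α) (a : ι → α) (S : Finset ι) (j : ι) : ι :=
  if h : ∃ k, k ∈ S ∧ k ≠ j ∧ H.Reachable (a j) (a k) then h.choose else j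

namespace PairsTerminals

theorem partner_spec (hS : PairsTerminals H a S) (hj : j ∈ S) :
    partner H a S j ∈ S ∧ partner H a S j ≠ j ∧ H.Reachable (a j) (a (partner H a S j)) := by
  rw [partner, dif_pos (hS j hj).exists]
  exact (hS j hj).exists.choose_spec

theorem partner_mem (hS : PairsTerminals H a S) (hj : j ∈ S) : partner H a S j ∈ S :=
  (hS.partner_spec hj).1

theorem partner_ne (hS : PairsTerminals H a S) (hj : j ∈ S) : partner H a S j ≠ j :=
  (hS.partner_spec hj).2.1

theorem reachable_partner (hS : PairsTerminals H a S) (hj : j ∈ S) :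
    H.Reachable (a j) (a (partner H a S j)) :=
  (hS.partner_spec hj).2.2

theorem reachable_iff (hS : PairsTerminals H a S) (hj : j ∈ S) (hk : k ∈ S) :
    H.Reachable (a j) (a k) ↔ k = j ∨ k = partner H a S j := by
  refine ⟨fun h ↦ or_iff_not_imp_left.2 fun hkj ↦
    (hS j hj).unique ⟨hk, hkj, h⟩ (hS.partner_spec hj), ?_⟩
  rintro (rfl | rfl)
  · rfl
  · exact hS.reachable_partner hj

theorem partner_partner (hS : PairsTerminals H a S) (hj : j ∈ S) :
    partner H a S (partner H a S j) = j :=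
  (((hS.reachable_iff (hS.partner_mem hj) hj).1 (hS.reachable_partner hj).symm).resolve_left
    (hS.partner_ne hj).symm).symm

end PairsTerminals

end PairedTerminals

section PositionSign

/-- The sign `(-1) ^ (p - 1)`, where `p` is the position of `j` in the increasing enumeration
of `S`. -/
def positionSign {ι : Type*} [LinearOrder ι] (S : Finset ι) (j : ι) : ℤ :=
  (-1) ^ #{v ∈ S | v < j}

theorem positionSign_add_positionSign_eq_zero {ι : Type*} [LinearOrder ι] {S : Finset ι} {j k : ι}
    (hj : j ∈ S) (hk : k ∈ S) (hjk : j ≠ k) (heven : Even #{v ∈ S | v ∈ Set.Ioo (j ⊓ k) (j ⊔ k)}) :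
    positionSign S j + positionSign S k = 0 := by
  wlog hlt : j < k generalizing j k
  · rw [add_comm]
    exact this hk hj hjk.symm (by rwa [inf_comm, sup_comm]) (hjk.lt_or_gt.resolve_left hlt)
  rw [inf_of_le_left hlt.le, sup_of_le_right hlt.le] at heven
  have hsplit : {v ∈ S | v < k} = insert j ({v ∈ S | v < j} ∪ {v ∈ S | v ∈ Set.Ioo j k}) := by
    ext v
    simp only [Finset.mem_filter, Finset.mem_insert, Finset.mem_union, Set.mem_Ioo]
    grind
  have hdisj : Disjoint {v ∈ S | v < j} {v ∈ S | v ∈ Set.Ioo j k} :=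
    Finset.disjoint_filter.2 fun v _ hvj hv ↦ hvj.not_gt hv.1
  rw [positionSign, positionSign, hsplit, Finset.card_insert_of_notMem (by simp),
    Finset.card_union_of_disjoint hdisj, pow_succ, pow_add, heven.neg_one_pow]
  ring

variable {α : Type*} {G H : SimpleGraph α} {n : ℕ} {a : Fin n → α} {S : Finset (Fin n)} {j : Fin n}

theorem PairsTerminals.partner_mem_uIoo (hS : PairsTerminals H a S) (hH : H ≤ G)
    (hnc : NoncrossingList G (List.ofFn a)) (hj : j ∈ S) {v : Fin n} (hv : v ∈ S)
    (hvj : v ∈ Set.uIoo j (partner H a S j)) :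
    partner H a S v ∈ Set.uIoo j (partner H a S j) := by
  have hv_ne : v ≠ j ∧ v ≠ partner H a S j := by
    simp only [Set.uIoo, Set.mem_Ioo] at hvj
    grind
  have hpv_ne : partner H a S v ≠ j ∧ partner H a S v ≠ partner H a S j := by
    constructor <;> intro h
    · exact hv_ne.2 (by rw [← h, hS.partner_partner hv])
    · exact hv_ne.1 (by rw [← hS.partner_partner hv, h, hS.partner_partner hj])
  by_contra hpv
  have hpv_notMem : partner H a S v ∉ Set.uIcc j (partner H a S j) := by
    simp only [Set.uIoo, Set.uIcc, Set.mem_Ioo, Set.mem_Icc] at hpv ⊢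
    grind
  have hreach := hnc.reachable_of_interlacing hH hvj hpv_notMem (hS.reachable_partner hj)
    (hS.reachable_partner hv)
  exact ((hS.reachable_iff hj hv).1 hreach).elim hv_ne.1 hv_ne.2

theorem PairsTerminals.even_card_Ioo_partner (hS : PairsTerminals H a S) (hH : H ≤ G)
    (hnc : NoncrossingList G (List.ofFn a)) (hj : j ∈ S) :
    Even #{v ∈ S | v ∈ Set.Ioo (j ⊓ partner H a S j) (j ⊔ partner H a S j)} := by
  have hsum : ∑ v ∈ S with v ∈ Set.Ioo (j ⊓ partner H a S j) (j ⊔ partner H a S j),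
      (1 : ZMod 2) = 0 := by
    refine Finset.sum_involution (fun v _ ↦ partner H a S v) (fun _ _ ↦ by decide) ?_ ?_ ?_
    all_goals intro v hv; have hvS := (Finset.mem_filter.1 hv).1
    · exact fun _ ↦ hS.partner_ne hvS
    · exact Finset.mem_filter.2 ⟨hS.partner_mem hvS,
        hS.partner_mem_uIoo hH hnc hj hvS (Finset.mem_filter.1 hv).2⟩
    · exact hS.partner_partner hvS
  rwa [Finset.sum_const, nsmul_one, ZMod.natCast_eq_zero_iff_even] at hsum

theorem PairsTerminals.positionSign_add_positionSign_partner (hS : PairsTerminals H a S)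
    (hH : H ≤ G) (hnc : NoncrossingList G (List.ofFn a)) (hj : j ∈ S) :
    positionSign S j + positionSign S (partner H a S j) = 0 :=
  positionSign_add_positionSign_eq_zero hj (hS.partner_mem hj) (hS.partner_ne hj).symm
    (hS.even_card_Ioo_partner hH hnc hj)

end PositionSign

section Switch

variable {α : Type*} {σ τ : α → α} {x y : α}

open Classical in
/-- The map `σ` with its values on the component of `x` in `superposition σ τ` replaced by those
of `τ`. -/
noncomputable def switch (σ τ : α → α) (x : α) : α → α :=
  {y | (superposition σ τ).Reachable x y}.piecewise τ σ

theorem switch_of_reachable (hxy : (superposition σ τ).Reachable x y) : switch σ τ x y = τ y := by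
  classical exact Set.piecewise_eq_of_mem _ _ _ hxy

theorem switch_of_not_reachable (hxy : ¬ (superposition σ τ).Reachable x y) :
    switch σ τ x y = σ y := by
  classical exact Set.piecewise_eq_of_notMem _ _ _ hxy

theorem superposition_switch (σ τ : α → α) (x : α) :
    superposition (switch σ τ x) (switch τ σ x) = superposition σ τ := by
  have hswitch : ∀ y z, (z = switch σ τ x y ∨ z = switch τ σ x y) ↔ (z = σ y ∨ z = τ y) := by
    intro y z
    by_cases hxy : (superposition σ τ).Reachable x y
    · rw [switch_of_reachable hxy, switch_of_reachable (superposition_comm σ τ ▸ hxy), or_comm]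
    · rw [switch_of_not_reachable hxy, switch_of_not_reachable (superposition_comm σ τ ▸ hxy)]
  ext y z
  simp only [superposition, SimpleGraph.fromRel_adj, hswitch]

theorem switch_switch (hxy : (superposition σ τ).Reachable x y) :
    switch (switch σ τ x) (switch τ σ x) y = σ := by
  ext z
  have hyz : (superposition σ τ).Reachable y z ↔ (superposition σ τ).Reachable x z :=
    ⟨hxy.trans, hxy.symm.trans⟩
  by_cases hxz : (superposition σ τ).Reachable x z
  · rw [switch_of_reachable (by rwa [superposition_switch, hyz]),
      switch_of_reachable (superposition_comm σ τ ▸ hxz)]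
  · rw [switch_of_not_reachable (by rwa [superposition_switch, hyz]), switch_of_not_reachable hxz]

theorem isMatchingInvolution_switch {G : SimpleGraph α} {D E : Set α}
    (hσ : IsMatchingInvolution G D σ) (hτ : IsMatchingInvolution G E τ) (x : α) :
    IsMatchingInvolution G ({y | (superposition σ τ).Reachable x y}.ite E D) (switch σ τ x) := by
  have hcases : ∀ y, (superposition σ τ).Reachable x y ∧ switch σ τ x y = τ y ∨
      ¬ (superposition σ τ).Reachable x y ∧ switch σ τ x y = σ y := fun y ↦
    (em _).imp (fun h ↦ ⟨h, switch_of_reachable h⟩) (fun h ↦ ⟨h, switch_of_not_reachable h⟩)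
  refine ⟨fun y ↦ ?_, fun y ↦ ?_, fun y ↦ ?_⟩ <;> rcases hcases y with ⟨hxy, hy⟩ | ⟨hxy, hy⟩ <;>
    rw [hy]
  · rw [switch_of_reachable (hxy.trans (superposition_reachable_right σ τ y)), hτ.involutive]
  · rw [switch_of_not_reachable fun h ↦ hxy (h.trans (superposition_reachable_left σ τ y).symm),
      hσ.involutive]
  · exact hτ.adj y
  · exact hσ.adj y
  · simp [hτ.apply_eq_self_iff, Set.ite, hxy]
  · simp [hσ.apply_eq_self_iff, Set.ite, hxy]

end Switch

section Exchange

variable {α ι : Type*} [DecidableEq ι] {G : SimpleGraph α} {a : ι → α} {S T : Finset ι}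
  {σ τ : α → α} {i j : ι}

theorem IsMatchingInvolution.pairsTerminals [Finite α] (hσ : IsMatchingInvolution G (a '' T) σ)
    (hτ : IsMatchingInvolution G (a '' ↑(S \ T)) τ) (ha : Injective a) (hT : T ⊆ S) :
    PairsTerminals (superposition σ τ) a S := by
  intro j hj
  wlog hjT : j ∈ T generalizing σ τ T
  · rw [superposition_comm]
    exact this hτ (by rwa [Finset.sdiff_sdiff_eq_self hT]) Finset.sdiff_subset
      (Finset.mem_sdiff.2 ⟨hj, hjT⟩)
  have hfixed : ∀ y, (σ y = y ∨ τ y = y) ↔ ∃ k ∈ S, a k = y := by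
    intro y
    rw [hσ.apply_eq_self_iff, hτ.apply_eq_self_iff, ← Set.mem_union, ← Set.image_union,
      ← Finset.coe_union, Finset.union_sdiff_of_subset hT]
    simp
  have hσj : σ (a j) = a j := (hσ.apply_eq_self_iff _).2 (Set.mem_image_of_mem a hjT)
  have hτj : τ (a j) ≠ a j := by
    rw [Ne, hτ.apply_eq_self_iff, ha.mem_set_image]
    simp [hjT]
  obtain ⟨y, ⟨hyj, hreach, hy⟩, huniq⟩ :=
    existsUnique_reachable_fixed hσ.involutive hτ.involutive hσj hτj
  obtain ⟨k, hk, rfl⟩ := (hfixed y).1 hy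
  refine ⟨k, ⟨hk, fun h ↦ hyj (congrArg a h), hreach⟩, ?_⟩
  rintro l ⟨hl, hlj, hjl⟩
  exact ha (huniq _ ⟨ha.ne hlj, hjl, (hfixed _).2 ⟨l, hl, rfl⟩⟩)

theorem PairsTerminals.ite_image_eq {H : SimpleGraph α} (hS : PairsTerminals H a S)
    (ha : Injective a) (hT : T ⊆ S) (hj : j ∈ S) :
    {y | H.Reachable (a j) y}.ite (a '' ↑(S \ T)) (a '' T) =
      a '' ↑(T ∆ {j, partner H a S j}) := by
  ext y
  by_cases hy : ∃ k ∈ S, a k = y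
  · obtain ⟨k, hk, rfl⟩ := hy
    simp only [Set.ite, Set.mem_union, Set.mem_inter_iff, Set.mem_sdiff, Set.mem_ofPred_eq,
      ha.mem_set_image, Finset.mem_coe, hS.reachable_iff hj hk, Finset.mem_sdiff,
      Finset.mem_symmDiff, Finset.mem_insert, Finset.mem_singleton]
    tauto
  · have himage : ∀ U ⊆ S, y ∉ a '' (U : Set ι) := by
      rintro U hU ⟨k, hk, rfl⟩
      exact hy ⟨k, hU hk, rfl⟩
    have hsymm : T ∆ {j, partner H a S j} ⊆ S :=
      Finset.symmDiff_subset_union.trans (Finset.union_subset hT (Finset.insert_subset hj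
        (Finset.singleton_subset_iff.2 (hS.partner_mem hj))))
    simp only [Set.ite, Set.mem_union, Set.mem_inter_iff, Set.mem_sdiff, himage _ hsymm,
      himage _ hT, himage _ Finset.sdiff_subset, false_and, or_self]

theorem isMatchingInvolution_switch_terminal [Finite α] (hσ : IsMatchingInvolution G (a '' T) σ)
    (hτ : IsMatchingInvolution G (a '' ↑(S \ T)) τ) (ha : Injective a) (hT : T ⊆ S) (hj : j ∈ S) :
    IsMatchingInvolution G (a '' ↑(T ∆ {j, partner (superposition σ τ) a S j}))
      (switch σ τ (a j)) := by
  rw [← (hσ.pairsTerminals hτ ha hT).ite_image_eq ha hT hj]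
  exact isMatchingInvolution_switch hσ hτ (a j)

/-- The configurations `(j, σ, τ)` counted by the condensation identity: `σ` and `τ` are perfect
matchings of `G` with the terminals of `{i} ∆ {j}`, respectively of its complement in `S`, deleted.
The symmetric difference makes the case `j = i` delete no terminal for `σ`. -/
structure IsConfiguration (G : SimpleGraph α) (a : ι → α) (S : Finset ι) (i : ι)
    (c : ι × (α → α) × (α → α)) : Prop where
  mem : c.1 ∈ S
  left : IsMatchingInvolution G (a '' ({i} ∆ {c.1} : Finset ι)) c.2.1
  right : IsMatchingInvolution G (a '' ↑(S \ ({i} ∆ {c.1}))) c.2.2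

/-- Kuo's involution: exchange the two matchings along the component of `a j`, so that `j` is
replaced by its partner. -/
noncomputable def exchange (a : ι → α) (S : Finset ι) (c : ι × (α → α) × (α → α)) :
    ι × (α → α) × (α → α) :=
  (partner (superposition c.2.1 c.2.2) a S c.1,
    switch c.2.1 c.2.2 (a c.1), switch c.2.2 c.2.1 (a c.1))

variable {c : ι × (α → α) × (α → α)}

namespace IsConfiguration

theorem symmDiff_subset (hc : IsConfiguration G a S i c) (hi : i ∈ S) : {i} ∆ {c.1} ⊆ S :=
  Finset.symmDiff_subset_union.trans (Finset.union_subset (Finset.singleton_subset_iff.2 hi)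
    (Finset.singleton_subset_iff.2 hc.mem))

theorem pairsTerminals [Finite α] (hc : IsConfiguration G a S i c) (ha : Injective a)
    (hi : i ∈ S) : PairsTerminals (superposition c.2.1 c.2.2) a S :=
  hc.left.pairsTerminals hc.right ha (hc.symmDiff_subset hi)

theorem exchange_ne [Finite α] (hc : IsConfiguration G a S i c) (ha : Injective a) (hi : i ∈ S) :
    exchange a S c ≠ c :=
  fun h ↦ (hc.pairsTerminals ha hi).partner_ne hc.mem (congrArg Prod.fst h)

theorem exchange_exchange [Finite α] (hc : IsConfiguration G a S i c) (ha : Injective a)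
    (hi : i ∈ S) : exchange a S (exchange a S c) = c := by
  have hS := hc.pairsTerminals ha hi
  have hreach := hS.reachable_partner hc.mem
  refine Prod.ext ?_ (Prod.ext ?_ ?_) <;> simp only [exchange]
  · rw [superposition_switch, hS.partner_partner hc.mem]
  · exact switch_switch hreach
  · exact switch_switch (superposition_comm c.2.1 c.2.2 ▸ hreach)

protected theorem exchange [Finite α] (hc : IsConfiguration G a S i c) (ha : Injective a)
    (hi : i ∈ S) : IsConfiguration G a S i (exchange a S c) := by
  have hT := hc.symmDiff_subset hi
  have hk := (hc.pairsTerminals ha hi).partner_mem hc.mem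
  have hkj := (hc.pairsTerminals ha hi).partner_ne hc.mem
  set k := partner (superposition c.2.1 c.2.2) a S c.1 with hk_def
  have hleft : ({i} ∆ {c.1}) ∆ {c.1, k} = ({i} ∆ {k} : Finset ι) := by
    ext v
    simp only [Finset.mem_symmDiff, Finset.mem_singleton, Finset.mem_insert]
    grind
  have hright : (S \ ({i} ∆ {c.1})) ∆ {c.1, k} = S \ ({i} ∆ {k}) := by
    ext v
    simp only [Finset.mem_symmDiff, Finset.mem_sdiff, Finset.mem_singleton, Finset.mem_insert]
    grind [hc.mem]
  refine ⟨hk, ?_, ?_⟩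
  · have := isMatchingInvolution_switch_terminal hc.left hc.right ha hT hc.mem
    rwa [← hk_def, hleft] at this
  · have := isMatchingInvolution_switch_terminal hc.right
      (by rw [Finset.sdiff_sdiff_eq_self hT]; exact hc.left) ha Finset.sdiff_subset hc.mem
    rwa [superposition_comm, ← hk_def, hright] at this

end IsConfiguration

end Exchange

section Condensation

variable {α : Type*} [Fintype α] {G : SimpleGraph α}

/-- The number of perfect matchings of `G` with the terminals indexed by `T` deleted. -/
noncomputable def deletionCount {ι : Type*} [DecidableEq α] (G : SimpleGraph α) (a : ι → α)
    (T : Finset ι) : ℕ :=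
  pmCount G (Finset.univ \ T.image a)

open Classical in
theorem deletionCount_eq_card {ι : Type*} [DecidableEq α] (G : SimpleGraph α) (a : ι → α)
    (T : Finset ι) :
    deletionCount G a T = #{σ : α → α | IsMatchingInvolution G (a '' T) σ} := by
  have hcompl : ((Finset.univ \ T.image a : Finset α) : Set α)ᶜ = a '' T := by
    simp [← Set.compl_eq_univ_sdiff]
  rw [deletionCount, pmCount_eq_card_isMatchingInvolution, hcompl, Nat.card_eq_fintype_card,
    Fintype.card_subtype]

open Classical in
theorem sum_positionSign_mul_deletionCount_eq_sum_isConfiguration [DecidableEq α] {n : ℕ}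
    (G : SimpleGraph α) (a : Fin n → α) (S : Finset (Fin n)) (i : Fin n) :
    ∑ j ∈ S, positionSign S j *
        (deletionCount G a ({i} ∆ {j}) * deletionCount G a (S \ ({i} ∆ {j}))) =
      ∑ c with IsConfiguration G a S i c, positionSign S c.1 := by
  have hmaps : ∀ c ∈ Finset.univ.filter (IsConfiguration G a S i), c.1 ∈ S := fun c hc ↦
    (Finset.mem_filter.1 hc).2.mem
  rw [← Finset.sum_fiberwise_of_maps_to hmaps]
  refine Finset.sum_congr rfl fun j hj ↦ ?_
  have hfiber : {c ∈ Finset.univ.filter (IsConfiguration G a S i) | c.1 = j} =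
      {j} ×ˢ (Finset.univ.filter (IsMatchingInvolution G (a '' ({i} ∆ {j} : Finset (Fin n)))) ×ˢ
        Finset.univ.filter (IsMatchingInvolution G (a '' ↑(S \ ({i} ∆ {j}))))) := by
    ext ⟨k, σ, τ⟩
    simp only [Finset.mem_filter, Finset.mem_univ, true_and, Finset.mem_product,
      Finset.mem_singleton]
    constructor
    · rintro ⟨hc, rfl⟩
      exact ⟨rfl, hc.left, hc.right⟩
    · rintro ⟨rfl, hσ, hτ⟩
      exact ⟨⟨hj, hσ, hτ⟩, rfl⟩
  rw [deletionCount_eq_card, deletionCount_eq_card, hfiber, Finset.sum_product,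
    Finset.sum_singleton]
  simp only [Finset.sum_const, Finset.card_product, nsmul_eq_mul, Nat.cast_mul, mul_comm]

theorem sum_positionSign_mul_deletionCount_eq_zero [DecidableEq α] {n : ℕ} {a : Fin n → α}
    {S : Finset (Fin n)} {i : Fin n} (ha : Injective a) (hnc : NoncrossingList G (List.ofFn a))
    (hi : i ∈ S) :
    ∑ j ∈ S, positionSign S j *
      (deletionCount G a ({i} ∆ {j}) * deletionCount G a (S \ ({i} ∆ {j})) : ℤ) = 0 := by
  classical
  rw [sum_positionSign_mul_deletionCount_eq_sum_isConfiguration]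
  refine Finset.sum_involution (fun c _ ↦ exchange a S c) ?_ ?_ ?_ ?_
  all_goals
    intro c hc
    replace hc : IsConfiguration G a S i c := (Finset.mem_filter.1 hc).2
  · exact (hc.pairsTerminals ha hi).positionSign_add_positionSign_partner
      (hc.left.superposition_le hc.right) hnc hc.mem
  · exact fun _ ↦ hc.exchange_ne ha hi
  · exact Finset.mem_filter.2 ⟨Finset.mem_univ _, hc.exchange ha hi⟩
  · exact hc.exchange_exchange ha hi

end Condensation

section OneFactor

variable {ι : Type*} [LinearOrder ι] {S : Finset ι} {F : Finset (ι × ι)} {i j : ι}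

/-- A partition `F` of `S` into pairs, each recorded in increasing order. -/
structure IsOneFactorOn (S : Finset ι) (F : Finset (ι × ι)) : Prop where
  lt : ∀ p ∈ F, p.1 < p.2
  fst_mem : ∀ p ∈ F, p.1 ∈ S
  snd_mem : ∀ p ∈ F, p.2 ∈ S
  existsUnique : ∀ v ∈ S, ∃! p, p ∈ F ∧ (v = p.1 ∨ v = p.2)

theorem isOneFactorOn_univ_iff {n : ℕ} {F : Finset (Fin n × Fin n)} :
    IsOneFactorOn Finset.univ F ↔ IsOneFactor n F :=
  ⟨fun h ↦ ⟨h.lt, fun v ↦ h.existsUnique v (Finset.mem_univ v)⟩,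
    fun h ↦ ⟨h.1, fun _ _ ↦ Finset.mem_univ _, fun _ _ ↦ Finset.mem_univ _, fun v _ ↦ h.2 v⟩⟩

theorem isOneFactorOn_empty_iff : IsOneFactorOn ∅ F ↔ F = ∅ := by
  constructor
  · exact fun h ↦ Finset.eq_empty_of_forall_notMem fun p hp ↦ Finset.notMem_empty _ (h.fst_mem p hp)
  · rintro rfl
    constructor <;> simp

namespace IsOneFactorOn

theorem insert_pair (hF : IsOneFactorOn (S \ {i, j}) F) (hi : i ∈ S) (hj : j ∈ S) (hij : i < j) :
    IsOneFactorOn S (insert (i, j) F) := by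
  have hfst := hF.fst_mem
  have hsnd := hF.snd_mem
  simp only [Finset.mem_sdiff, Finset.mem_insert, Finset.mem_singleton] at hfst hsnd
  refine ⟨?_, ?_, ?_, fun v hv ↦ ?_⟩
  · simpa using ⟨hij, fun x y ↦ hF.lt (x, y)⟩
  · simpa using ⟨hi, fun x y hxy ↦ (hfst (x, y) hxy).1⟩
  · simpa using ⟨hj, fun x y hxy ↦ (hsnd (x, y) hxy).1⟩
  · by_cases hvij : v = i ∨ v = j
    · exact ⟨(i, j), ⟨Finset.mem_insert_self _ _, hvij⟩, by grind⟩
    · obtain ⟨p, ⟨hp, hvp⟩, huniq⟩ := hF.existsUnique v (by simpa using ⟨hv, not_or.1 hvij⟩)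
      exact ⟨p, ⟨Finset.mem_insert_of_mem hp, hvp⟩, by grind⟩

theorem erase_pair (hF : IsOneFactorOn S F) (hij : (i, j) ∈ F) :
    IsOneFactorOn (S \ {i, j}) (F.erase (i, j)) := by
  have hother : ∀ p ∈ F.erase (i, j), ∀ v ∈ S, (v = p.1 ∨ v = p.2) → v ∈ S \ {i, j} := by
    intro p hp v hv hvp
    obtain ⟨hpne, hpF⟩ := Finset.mem_erase.1 hp
    simp only [Finset.mem_sdiff, Finset.mem_insert, Finset.mem_singleton]
    exact ⟨hv, fun hvij ↦ hpne ((hF.existsUnique v hv).unique ⟨hpF, hvp⟩ ⟨hij, hvij⟩)⟩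
  refine ⟨fun p hp ↦ hF.lt p (Finset.mem_of_mem_erase hp), fun p hp ↦ ?_, fun p hp ↦ ?_,
    fun v hv ↦ ?_⟩
  · exact hother p hp _ (hF.fst_mem p (Finset.mem_of_mem_erase hp)) (Or.inl rfl)
  · exact hother p hp _ (hF.snd_mem p (Finset.mem_of_mem_erase hp)) (Or.inr rfl)
  · simp only [Finset.mem_sdiff, Finset.mem_insert, Finset.mem_singleton] at hv
    obtain ⟨p, ⟨hp, hvp⟩, huniq⟩ := hF.existsUnique v hv.1
    refine ⟨p, ⟨Finset.mem_erase.2 ⟨?_, hp⟩, hvp⟩, ?_⟩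
    · rintro rfl
      exact hv.2 hvp
    · exact fun q hq ↦ huniq q ⟨Finset.mem_of_mem_erase hq.1, hq.2⟩

theorem exists_pair_of_isLeast (hF : IsOneFactorOn S F) (hi : IsLeast (S : Set ι) i) :
    ∃ j ∈ S.erase i, (i, j) ∈ F := by
  obtain ⟨⟨k, j⟩, ⟨hkj, rfl | rfl⟩, -⟩ := hF.existsUnique i hi.1
  · exact ⟨j, Finset.mem_erase.2 ⟨(hF.lt _ hkj).ne', hF.snd_mem _ hkj⟩, hkj⟩
  · exact absurd (hF.lt _ hkj) (hi.2 (hF.fst_mem _ hkj)).not_gt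

theorem lt_fst_of_isLeast (hF : IsOneFactorOn (S \ {i, j}) F) (hi : IsLeast (S : Set ι) i) :
    ∀ p ∈ F, i < p.1 := by
  intro p hp
  have hmem := hF.fst_mem p hp
  simp only [Finset.mem_sdiff, Finset.mem_insert, Finset.mem_singleton, not_or] at hmem
  exact lt_of_le_of_ne (hi.2 hmem.1) (Ne.symm hmem.2.1)

theorem sum_eq {M : Type*} [AddCommMonoid M] (hF : IsOneFactorOn S F) (f : ι → M) :
    ∑ v ∈ S, f v = ∑ p ∈ F, (f p.1 + f p.2) := by
  have hmem : ∀ p ∈ F, ∀ v ∈ ({p.1, p.2} : Finset ι), v ∈ S := by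
    simpa using fun x y hxy ↦ ⟨hF.fst_mem (x, y) hxy, hF.snd_mem (x, y) hxy⟩
  have hS : S = F.biUnion fun p ↦ {p.1, p.2} := by
    ext v
    simp only [Finset.mem_biUnion]
    refine ⟨fun hv ↦ ?_, fun ⟨p, hp, hv⟩ ↦ hmem p hp v hv⟩
    obtain ⟨p, ⟨hp, hvp⟩, -⟩ := hF.existsUnique v hv
    exact ⟨p, hp, by simpa using hvp⟩
  have hdisj : (F : Set (ι × ι)).PairwiseDisjoint fun p ↦ ({p.1, p.2} : Finset ι) := by
    refine fun p hp q hq hpq ↦ Finset.disjoint_left.2 fun v hvp hvq ↦ hpq ?_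
    exact (hF.existsUnique v (hmem p hp v hvp)).unique ⟨hp, by simpa using hvp⟩
      ⟨hq, by simpa using hvq⟩
  rw [hS, Finset.sum_biUnion hdisj]
  exact Finset.sum_congr rfl fun p hp ↦ Finset.sum_pair (hF.lt p hp).ne

theorem card_filter_lt (hF : IsOneFactorOn S F) (hj : j ∉ S) :
    #{v ∈ S | v < j} = #{p ∈ F | p.1 < j ∧ j < p.2} + 2 * #{p ∈ F | p.2 < j} := by
  simp only [Finset.card_filter, hF.sum_eq, Finset.mul_sum, ← Finset.sum_add_distrib]
  refine Finset.sum_congr rfl fun p hp ↦ ?_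
  have hlt := hF.lt p hp
  have hne : p.2 ≠ j := by
    rintro rfl
    exact hj (hF.snd_mem p hp)
  grind

theorem positionSign_eq (hF : IsOneFactorOn (S \ {i, j}) F) (hi : IsLeast (S : Set ι) i)
    (hj : j ∈ S.erase i) : positionSign S j = -(-1) ^ #{p ∈ F | p.1 < j ∧ j < p.2} := by
  obtain ⟨hji, hjS⟩ := Finset.mem_erase.1 hj
  have hij : i < j := lt_of_le_of_ne (hi.2 hjS) hji.symm
  have hsplit : {v ∈ S | v < j} = insert i {v ∈ S \ {i, j} | v < j} := by
    have := hi.1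
    ext v
    simp only [Finset.mem_filter, Finset.mem_insert, Finset.mem_sdiff, Finset.mem_singleton]
    grind
  rw [positionSign, hsplit, Finset.card_insert_of_notMem (by simp), hF.card_filter_lt (by simp),
    pow_succ, pow_add, (even_two_mul _).neg_one_pow]
  ring

end IsOneFactorOn

end OneFactor

section Pfaffian

variable {n : ℕ} {R : Type*} [CommRing R] {S : Finset (Fin n)} {F : Finset (Fin n × Fin n)}
  {i j : Fin n}

theorem crossingNumber_eq_sum (F : Finset (Fin n × Fin n)) :
    crossingNumber n F =
      ∑ p ∈ F, ∑ q ∈ F, if p.1 < q.1 ∧ q.1 < p.2 ∧ p.2 < q.2 then 1 else 0 := by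
  rw [crossingNumber, Finset.card_filter, Finset.sum_product]

theorem crossingNumber_insert_of_forall_lt (hF : ∀ p ∈ F, i < p.1) :
    crossingNumber n (insert (i, j) F) =
      crossingNumber n F + #{p ∈ F | p.1 < j ∧ j < p.2} := by
  have hnot : (i, j) ∉ F := fun h ↦ lt_irrefl _ (hF _ h)
  have hfst : ∑ q ∈ F, (if i < q.1 ∧ q.1 < j ∧ j < q.2 then 1 else 0) =
      #{p ∈ F | p.1 < j ∧ j < p.2} := by
    rw [Finset.card_filter]
    exact Finset.sum_congr rfl fun q hq ↦ by simp [hF q hq]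
  have hsnd : ∀ p ∈ F, ¬ p.1 < i := fun p hp ↦ (hF p hp).not_gt
  simp only [crossingNumber_eq_sum, Finset.sum_insert hnot, Finset.sum_add_distrib, hfst]
  rw [Finset.sum_congr rfl fun p hp ↦ if_neg fun h ↦ hsnd p hp h.1]
  simp [add_comm]

theorem IsOneFactorOn.neg_one_pow_crossingNumber_insert (hF : IsOneFactorOn (S \ {i, j}) F)
    (hi : IsLeast (S : Set (Fin n)) i) (hj : j ∈ S.erase i) :
    (-1) ^ crossingNumber n (insert (i, j) F) =
      -((positionSign S j : R) * (-1) ^ crossingNumber n F) := by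
  rw [crossingNumber_insert_of_forall_lt (hF.lt_fst_of_isLeast hi), hF.positionSign_eq hi hj,
    pow_add]
  push_cast
  ring

open Classical in
/-- The Pfaffian of the triangular array `(g i j)` with `i < j` in `S`. -/
noncomputable def pfaffian (g : Fin n → Fin n → R) (S : Finset (Fin n)) : R :=
  ∑ F with IsOneFactorOn S F, (-1) ^ crossingNumber n F * ∏ p ∈ F, g p.1 p.2

theorem pfaffian_empty (g : Fin n → Fin n → R) : pfaffian g ∅ = 1 := by
  simp [pfaffian, isOneFactorOn_empty_iff, Finset.filter_eq', crossingNumber]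

theorem pfaffian_eq_neg_sum_erase (g : Fin n → Fin n → R) (hi : IsLeast (S : Set (Fin n)) i) :
    pfaffian g S =
      -∑ j ∈ S.erase i, (positionSign S j : R) * (g i j * pfaffian g (S \ {i, j})) := by
  classical
  simp only [pfaffian, Finset.mul_sum]
  rw [Finset.sum_sigma', ← Finset.sum_neg_distrib]
  symm
  have hnot : ∀ {j F}, IsOneFactorOn (S \ {i, j}) F → ∀ k, (i, k) ∉ F := fun hF k h ↦
    lt_irrefl _ (hF.lt_fst_of_isLeast hi _ h)
  refine Finset.sum_bij (fun x _ ↦ insert (i, x.1) x.2) ?_ ?_ ?_ ?_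
  · rintro ⟨j, F⟩ hx
    simp only [Finset.mem_sigma, Finset.mem_filter, Finset.mem_univ, true_and] at hx ⊢
    obtain ⟨hji, hjS⟩ := Finset.mem_erase.1 hx.1
    exact hx.2.insert_pair hi.1 hjS (lt_of_le_of_ne (hi.2 hjS) hji.symm)
  · rintro ⟨j, F⟩ hx ⟨j', F'⟩ hx' heq
    simp only [Finset.mem_sigma, Finset.mem_filter, Finset.mem_univ, true_and] at hx hx' heq
    have hmem : (i, j) ∈ insert (i, j') F' := heq ▸ Finset.mem_insert_self _ _
    obtain rfl : j = j' := by simpa [hnot hx'.2] using hmem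
    rw [← Finset.erase_insert (hnot hx.2 j), heq, Finset.erase_insert (hnot hx'.2 j)]
  · intro F hF
    replace hF := (Finset.mem_filter.1 hF).2
    obtain ⟨j, hj, hij⟩ := hF.exists_pair_of_isLeast hi
    exact ⟨⟨j, F.erase (i, j)⟩, by simpa using ⟨by simpa using hj, hF.erase_pair hij⟩,
      Finset.insert_erase hij⟩
  · rintro ⟨j, F⟩ hx
    simp only [Finset.mem_sigma, Finset.mem_filter, Finset.mem_univ, true_and] at hx ⊢
    rw [hx.2.neg_one_pow_crossingNumber_insert hi hx.1, Finset.prod_insert (hnot hx.2 j)]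
    ring

end Pfaffian

section Main

variable {α : Type*} [Fintype α] [DecidableEq α] {G : SimpleGraph α} {n : ℕ} {a : Fin n → α}

theorem pmCount_mul_deletionCount_eq_neg_sum_erase (ha : Injective a)
    (hnc : NoncrossingList G (List.ofFn a)) {S : Finset (Fin n)} {i : Fin n}
    (hi : IsLeast (S : Set (Fin n)) i) :
    (pmCount G Finset.univ * deletionCount G a S : ℤ) =
      -∑ j ∈ S.erase i, positionSign S j *
        (deletionCount G a {i, j} * deletionCount G a (S \ {i, j})) := by
  have hsign : positionSign S i = 1 := by
    rw [positionSign, Finset.filter_false_of_mem fun v hv ↦ (hi.2 hv).not_gt, Finset.card_empty,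
      pow_zero]
  have hpair : ∀ j ∈ S.erase i, ({i} ∆ {j} : Finset (Fin n)) = {i, j} := fun j hj ↦
    (Finset.disjoint_singleton.2 (Finset.ne_of_mem_erase hj).symm).symmDiff_eq_sup
  have hempty : deletionCount G a ∅ = pmCount G Finset.univ := by simp [deletionCount]
  have hcond := sum_positionSign_mul_deletionCount_eq_zero ha hnc hi.1
  rw [← Finset.add_sum_erase S _ hi.1, symmDiff_self, Finset.bot_eq_empty, Finset.sdiff_empty,
    hsign, one_mul, hempty] at hcond
  rw [eq_neg_iff_add_eq_zero, ← hcond]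
  exact congrArg _ (Finset.sum_congr rfl fun j hj ↦ by rw [hpair j hj])

theorem pmCount_pow_mul_deletionCount_eq_mul_pfaffian (ha : Injective a)
    (hnc : NoncrossingList G (List.ofFn a)) {m : ℕ} {S : Finset (Fin n)} (hS : #S = 2 * m) :
    (pmCount G Finset.univ : ℤ) ^ m * deletionCount G a S =
      pmCount G Finset.univ * pfaffian (fun i j ↦ (deletionCount G a {i, j} : ℤ)) S := by
  induction m generalizing S with
  | zero =>
    obtain rfl : S = ∅ := Finset.card_eq_zero.1 hS
    simp [pfaffian_empty, deletionCount]
  | succ m ih =>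
    have hne : S.Nonempty := Finset.card_pos.1 (by omega)
    have hi := S.isLeast_min' hne
    generalize S.min' hne = i at hi
    rw [pow_succ, mul_assoc, pmCount_mul_deletionCount_eq_neg_sum_erase ha hnc hi,
      pfaffian_eq_neg_sum_erase _ hi, mul_neg, mul_neg, Finset.mul_sum, Finset.mul_sum]
    refine congrArg _ (Finset.sum_congr rfl fun j hj ↦ ?_)
    have hcard : #(S \ {i, j}) = 2 * m := by
      obtain ⟨hji, hjS⟩ := Finset.mem_erase.1 hj
      rw [Finset.card_sdiff_of_subset (Finset.insert_subset hi.1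
        (Finset.singleton_subset_iff.2 hjS)), Finset.card_pair hji.symm]
      omega
    linear_combination (positionSign S j * deletionCount G a {i, j} : ℤ) * ih hcard

end Main

open Classical in
theorem pfaffian_condensation_M_G_sub_A_general {α : Type*} [Fintype α] [DecidableEq α]
    (G : SimpleGraph α) (n : ℕ) (hn : Even n)
    (a : Fin n → α) (hdist : (List.ofFn a).Nodup)
    (hnc : NoncrossingList G (List.ofFn a)) :
    (pmCount G Finset.univ : ℤ) ^ (n / 2) * pmCount G (Finset.univ \ Finset.univ.image a) =
      pmCount G Finset.univ *
        ∑ F ∈ Finset.univ.filter (fun F : Finset (Fin n × Fin n) => IsOneFactor n F),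
          (-1 : ℤ) ^ crossingNumber n F *
            ∏ p ∈ F, (pmCount G (Finset.univ \ {a p.1, a p.2}) : ℤ) := by
  have hcard : #(Finset.univ : Finset (Fin n)) = 2 * (n / 2) := by
    rw [Finset.card_fin, Nat.two_mul_div_two_of_even hn]
  simpa [pfaffian, deletionCount, isOneFactorOn_univ_iff, Finset.image_insert] using
    pmCount_pow_mul_deletionCount_eq_mul_pfaffian (List.nodup_ofFn.1 hdist) hnc hcard

open Classical in
/-- (Corollary 3.9.) Pfaffian condensation with `H = G`. -/
theorem pfaffian_condensation_M_G_sub_A {α : Type*} [Fintype α] [DecidableEq α]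
    (G : SimpleGraph α) (n : ℕ) (hn : Even n)
    (a : Fin n → α) (hdist : (List.ofFn a).Nodup)
    (hnc : NoncrossingList G (List.ofFn a))
    (huniq : ∃! m : Finset (Sym2 α), IsPMOn G Finset.univ m) :
    (pmCount G (Finset.univ \ Finset.univ.image a) : ℤ) =
      ∑ F ∈ Finset.univ.filter (fun F : Finset (Fin n × Fin n) => IsOneFactor n F),
        (-1 : ℤ) ^ crossingNumber n F *
          ∏ p ∈ F, (pmCount G (Finset.univ \ {a p.1, a p.2}) : ℤ) := by
  simpa [pmCount_eq_one_iff.2 huniq] using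
    pfaffian_condensation_M_G_sub_A_general G n hn a hdist hnc
end

section
/- Let G be a finite simple bipartite graph with bipartition classes U and V, and let a_1,…,a_n, b_n,…,b_1 be distinct vertices such that G is noncrossing with respect to the cyclic sequence (a_1,…,a_n, b_n,…,b_1). Set A = {a_1,…,a_n} and B = {b_1,…,b_n}, let L = G−(A∩U)−(B∩V), and for 1 ≤ i,j ≤ n let L_{ij} be the induced subgraph of G on the symmetric difference of V(L) and {a_i, b_j}. If L has exactly one perfect matching, then M(G−(A∩V)−(B∩U)) = det[M(L_{ij})]_{1≤i,j≤n}. -/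
/-! Directing the edges of `G` out of `U` and contracting the edges of the unique perfect matching
of `L` gives a digraph, which has no directed cycle because such a cycle would produce a second
perfect matching of `L`. Superposing a perfect matching of another vertex set with the one of `L`
turns it into a system of vertex-disjoint paths of this digraph that joins the terminals in which
the two vertex sets differ. Closing up the paths by jumps from the sinks `b j` to the sources `a j`
makes each system a permutation, that is, a term of the determinant of `1 - A` (`A` the adjacency
matrix) with the row of each sink replaced by the indicator of a source. Since `G` is noncrossing,
the `j`-th source is always joined to the `j`-th sink, so every nontrivial cycle of such a
permutation contains exactly one jump and its term is `+1`. Hence these determinants count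
matchings, and Jacobi's complementary minor identity expresses the determinant with all `n` sink
rows replaced through those with a single one replaced. -/

namespace Condensation

open Equiv (Perm)

section Determinants

variable {α ι K : Type*} [Fintype α] [DecidableEq α] [CommRing K]

lemma sign_eq_neg_one_pow_card_support_sdiff (σ : Perm α) (T : Finset α)
    (hsep : ∀ x ∈ T, ∀ y ∈ T, σ.SameCycle x y → x = y)
    (hmeet : ∀ x ∈ σ.support, ∃ y ∈ T, σ.SameCycle x y) :
    Perm.sign σ = (-1) ^ (σ.support \ T).card := by
  have hcycles : σ.cycleType.card = (σ.support ∩ T).card := by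
    rw [Perm.cycleType_def, Multiset.card_map]
    refine (Finset.card_bij (fun x _ => σ.cycleOf x) ?_ ?_ ?_).symm
    · exact fun x hx => Perm.cycleOf_mem_cycleFactorsFinset_iff.2 (Finset.mem_inter.1 hx).1
    · intro x hx y hy hxy
      rw [Finset.mem_inter] at hx hy
      exact hsep x hx.2 y hy.2
        ((Perm.sameCycle_iff_cycleOf_eq_of_mem_support hx.1 hy.1).2 hxy)
    · intro c hc
      obtain ⟨x, hx⟩ := (Perm.mem_cycleFactorsFinset_iff.1 hc).1.nonempty_support
      obtain ⟨y, hyT, hxy⟩ := hmeet x (Perm.mem_cycleFactorsFinset_support_le hc hx)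
      have hy : y ∈ σ.support :=
        (hxy.mem_support_iff).1 (Perm.mem_cycleFactorsFinset_support_le hc hx)
      exact ⟨y, Finset.mem_inter.2 ⟨hy, hyT⟩,
        hxy.cycleOf_eq.symm.trans (Perm.cycle_is_cycleOf hx hc).symm⟩
  have hsupport := Finset.card_inter_add_card_sdiff σ.support T
  rw [Perm.sign_of_cycleType, Perm.sum_cycleType, hcycles, ← hsupport, add_right_comm, pow_add,
    ← two_mul, pow_mul, neg_one_sq, one_pow, one_mul]

lemma vecMul_adjugate_apply (M : Matrix α α K) (v : α → K) (y : α) :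
    Matrix.vecMul v M.adjugate y = (M.updateRow y v).det := by
  rw [← Matrix.cramer_transpose_apply, Matrix.cramer_eq_adjugate_mulVec,
    ← Matrix.adjugate_transpose, Matrix.mulVec_transpose]

/-- A case of Jacobi's complementary minor identity: right multiplication by `M.adjugate = M⁻¹`
turns the untouched rows into rows of the identity matrix. -/
theorem det_extend_row [Fintype ι] [DecidableEq ι] {M : Matrix α α K} (hM : M.det = 1)
    {b : ι → α} (hb : Function.Injective b) (v : ι → α → K) :
    (Matrix.of (Function.extend b v M.row)).det =
      (Matrix.of fun i j => (M.updateRow (b j) (v i)).det).det := by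
  classical
  set X := Matrix.of (Function.extend b v M.row) * M.adjugate with hX
  have hX_apply (x y : α) : X x y = Matrix.vecMul (Function.extend b v M.row x) M.adjugate y := rfl
  have hX_range (i : ι) (y : α) : X (b i) y = (M.updateRow y (v i)).det := by
    rw [hX_apply, hb.extend_apply, vecMul_adjugate_apply]
  have hX_compl {x : α} (hx : x ∉ Set.range b) (y : α) : X x y = (1 : Matrix α α K) x y := by
    rw [hX_apply, Function.extend_apply' _ _ _ hx, ← one_smul K (1 : Matrix α α K), ← hM,
      ← M.mul_adjugate]
    rfl
  have hdet : X.det = (Matrix.of (Function.extend b v M.row)).det := by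
    rw [hX, Matrix.det_mul, Matrix.det_adjugate, hM, one_pow, mul_one]
  have hblock_range : Matrix.of (fun i j => (M.updateRow (b j) (v i)).det) =
      (X.toSquareBlockProp (· ∈ Set.range b)).submatrix
        (Equiv.ofInjective b hb) (Equiv.ofInjective b hb) := by
    ext i j
    exact (hX_range i (b j)).symm
  have hblock_compl : X.toSquareBlockProp (· ∉ Set.range b) = 1 := by
    ext x y
    rw [Matrix.toSquareBlockProp_def, Matrix.of_apply, hX_compl x.2]
    simp only [Matrix.one_apply, Subtype.ext_iff]
  have htriangular : ∀ x ∉ Set.range b, ∀ y ∈ Set.range b, X x y = 0 := fun x hx y hy => by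
    rw [hX_compl hx, Matrix.one_apply_ne (ne_of_mem_of_not_mem hy hx).symm]
  rw [← hdet, X.twoBlockTriangular_det (· ∈ Set.range b) htriangular, hblock_compl,
    Matrix.det_one, mul_one, hblock_range, Matrix.det_submatrix_equiv_self]
  congr!

end Determinants

section PathSystems

variable {α ι : Type*} {R : α → α → Prop} {c b : ι → α} {τ : Perm α}

/-- A system of vertex-disjoint paths from the sources `c` to the sinks `b` (in some pairing) and
of vertex-disjoint cycles, in the digraph with arcs `R`. It is encoded as a permutation: the
permutation follows the arcs, fixes the vertices that are not visited, and jumps from the sink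
`b j` to the source `c j`. -/
structure IsPathSystem (R : α → α → Prop) (c b : ι → α) (τ : Perm α) : Prop where
  apply_sink : ∀ j, τ (b j) = c j
  fixed_or_arc : ∀ x ∉ Set.range b, τ x = x ∨ R x (τ x)

/-- The digraph with arcs `R` has no directed cycles of length at least two: a permutation that
moves vertices along arcs only is trivial. -/
def CycleFree (R : α → α → Prop) : Prop :=
  ∀ σ : Perm α, (∀ x, σ x = x ∨ R x (σ x)) → σ = 1

lemma IsPathSystem.exists_sink_sameCycle (hτ : IsPathSystem R c b τ) (hR : CycleFree R) {x : α}
    (hx : τ x ≠ x) : ∃ j, τ.SameCycle x (b j) := by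
  classical
  by_contra! hsink
  refine hx ((Perm.cycleOf_eq_one_iff τ).1 (hR _ fun y => ?_))
  rw [Perm.cycleOf_apply]
  split_ifs with hxy
  · refine hτ.fixed_or_arc y ?_
    rintro ⟨j, rfl⟩
    exact hsink j hxy
  · exact Or.inl rfl

variable [DecidableEq α] {K : Type*} [CommRing K]

open Classical in
/-- The matrix `1 - A`, where `A` is the adjacency matrix of the digraph with arcs `R` stripped of
its loops. -/
noncomputable def arcMatrix (K : Type*) [CommRing K] (R : α → α → Prop) : Matrix α α K :=
  Matrix.of fun x y => if x = y then 1 else if R x y then -1 else 0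

/-- The matrix whose determinant counts path systems: `arcMatrix K R` with the row of each sink
`b j` replaced by the indicator of the source `c j`. -/
noncomputable def pathMatrix (K : Type*) [CommRing K] (R : α → α → Prop) (c b : ι → α) :
    Matrix α α K :=
  Matrix.of (Function.extend b (fun j => Pi.single (c j) 1) (arcMatrix K R).row)

lemma pathMatrix_sink_apply (hb : Function.Injective b) (j : ι) (y : α) :
    pathMatrix K R c b (b j) y = if y = c j then 1 else 0 := by
  rw [pathMatrix, Matrix.of_apply, hb.extend_apply, Pi.single_apply]

lemma pathMatrix_apply_of_notMem_range {x : α} (hx : x ∉ Set.range b) (y : α) :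
    pathMatrix K R c b x y = arcMatrix K R x y := by
  rw [pathMatrix, Matrix.of_apply, Function.extend_apply' _ _ _ hx, Matrix.row_apply]

lemma pathMatrix_of_isEmpty [IsEmpty ι] : pathMatrix K R c b = arcMatrix K R :=
  Matrix.ext fun _ y => pathMatrix_apply_of_notMem_range (by simp) y

lemma pathMatrix_unit (c b : α) :
    pathMatrix K R (fun _ : Unit => c) (fun _ : Unit => b) =
      (arcMatrix K R).updateRow b (Pi.single c 1) := by
  ext x y
  by_cases hx : x = b
  · subst hx
    rw [pathMatrix_sink_apply (Function.injective_of_subsingleton _) (), Matrix.updateRow_self,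
      Pi.single_apply]
  · rw [pathMatrix_apply_of_notMem_range (by simpa using hx), Matrix.updateRow_ne hx]

lemma isPathSystem_of_forall_pathMatrix_ne_zero (hb : Function.Injective b)
    (hτ : ∀ x, pathMatrix K R c b x (τ x) ≠ 0) : IsPathSystem R c b τ where
  apply_sink j := by
    by_contra hj
    exact hτ (b j) (by simp [pathMatrix_sink_apply hb, hj])
  fixed_or_arc x hx := by
    by_contra! hx'
    exact hτ x (by simp [pathMatrix_apply_of_notMem_range hx, arcMatrix, hx', Ne.symm hx'.1])

variable [Fintype α]

lemma IsPathSystem.prod_pathMatrix (hτ : IsPathSystem R c b τ) (hb : Function.Injective b)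
    {T : Finset α} (hT : ∀ x, x ∈ T ↔ x ∈ Set.range b) :
    ∏ x, pathMatrix K R c b x (τ x) = (-1) ^ (τ.support \ T).card := by
  have hentry (x : α) : pathMatrix K R c b x (τ x) = if x ∈ τ.support \ T then -1 else 1 := by
    by_cases hx : x ∈ Set.range b
    · have hxT : x ∈ T := (hT x).2 hx
      obtain ⟨j, rfl⟩ := hx
      simp [pathMatrix_sink_apply hb, hτ.apply_sink, hxT]
    · rw [pathMatrix_apply_of_notMem_range hx]
      by_cases hfix : τ x = x
      · simp [arcMatrix, hfix]
      · have harc : R x (τ x) := (hτ.fixed_or_arc x hx).resolve_left hfix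
        simp [arcMatrix, hT, hx, hfix, Ne.symm hfix, harc]
  simp_rw [hentry]
  rw [Finset.prod_ite_mem, Finset.univ_inter, Finset.prod_const]

/-- Every nontrivial cycle passes through exactly one sink, so the sign of the permutation cancels
the signs of its arcs. -/
lemma IsPathSystem.sign_mul_prod_eq_one (hτ : IsPathSystem R c b τ) (hb : Function.Injective b)
    (hR : CycleFree R) (hsep : ∀ i j, τ.SameCycle (b i) (b j) → i = j) :
    ((Perm.sign τ : ℤ) : K) * ∏ x, pathMatrix K R c b x (τ x) = 1 := by
  classical
  let T : Finset α := Finset.univ.filter (· ∈ Set.range b)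
  have hT (x : α) : x ∈ T ↔ x ∈ Set.range b := Finset.mem_filter_univ x
  have hsign : Perm.sign τ = (-1) ^ (τ.support \ T).card := by
    refine sign_eq_neg_one_pow_card_support_sdiff τ T ?_ fun x hx => ?_
    · intro x hx y hy hxy
      obtain ⟨i, rfl⟩ := (hT x).1 hx
      obtain ⟨j, rfl⟩ := (hT y).1 hy
      rw [hsep i j hxy]
    · obtain ⟨j, hj⟩ := hτ.exists_sink_sameCycle hR (Perm.mem_support.1 hx)
      exact ⟨b j, (hT _).2 ⟨j, rfl⟩, hj⟩
  rw [hsign, hτ.prod_pathMatrix hb hT]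
  push_cast
  rw [← mul_pow, neg_one_mul, neg_neg, one_pow]

theorem det_pathMatrix (hb : Function.Injective b) (hR : CycleFree R)
    (hsep : ∀ τ, IsPathSystem R c b τ → ∀ i j, τ.SameCycle (b i) (b j) → i = j) :
    (pathMatrix K R c b).det = Nat.card {τ : Perm α // IsPathSystem R c b τ} := by
  classical
  rw [Nat.card_eq_fintype_card, Fintype.card_subtype, Finset.card_filter, Nat.cast_sum,
    ← Matrix.det_transpose, Matrix.det_apply']
  refine Finset.sum_congr rfl fun τ _ => ?_
  simp only [Matrix.transpose_apply]
  split_ifs with hτ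
  · rw [hτ.sign_mul_prod_eq_one hb hR (hsep τ hτ), Nat.cast_one]
  · obtain ⟨x, hx⟩ : ∃ x, pathMatrix K R c b x (τ x) = 0 :=
      not_forall_not.1 fun h => hτ (isPathSystem_of_forall_pathMatrix_ne_zero hb h)
    rw [Finset.prod_eq_zero (Finset.mem_univ x) hx, mul_zero, Nat.cast_zero]

end PathSystems

section FirstReturns

variable {α ι : Type*} {σ : Perm α} {b : ι → α}

/-- Iterating `σ` from `b i`, the first vertex of the family `b` reached after at least one step
is `b j`, and it is reached after `k` steps. -/
structure FirstReturn (σ : Perm α) (b : ι → α) (i j : ι) (k : ℕ) : Prop where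
  pos : 0 < k
  apply_eq : (σ ^ k) (b i) = b j
  notMem_range : ∀ m, 0 < m → m < k → (σ ^ m) (b i) ∉ Set.range b

lemma exists_firstReturn [Finite α] (σ : Perm α) (b : ι → α) (i : ι) :
    ∃ j k, FirstReturn σ b i j k := by
  classical
  have hreturns : ∃ k, 0 < k ∧ (σ ^ k) (b i) ∈ Set.range b := by
    obtain ⟨k, hk, hσk⟩ := (isOfFinOrder_of_finite σ).exists_pow_eq_one
    exact ⟨k, hk, i, by rw [hσk, Perm.one_apply]⟩
  obtain ⟨hpos, j, hj⟩ := Nat.find_spec hreturns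
  exact ⟨j, Nat.find hreturns, hpos, hj.symm,
    fun m hm hmk hmem => Nat.find_min hreturns hmk ⟨hm, hmem⟩⟩

namespace FirstReturn

variable {i j i' j' : ι} {k k' m m' : ℕ}

lemma eq_of_pow_apply_eq (h : FirstReturn σ b i j k) (h' : FirstReturn σ b i' j' k')
    (hb : Function.Injective b) (hm : 0 < m) (hmk : m ≤ k) (hm' : 0 < m') (hmk' : m' ≤ k')
    (heq : (σ ^ m) (b i) = (σ ^ m') (b i')) : i = i' ∧ m = m' := by
  wlog hle : m ≤ m' generalizing i j i' j' k k' m m'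
  · exact (this h' h hm' hmk' hm hmk heq.symm (le_of_not_ge hle)).imp Eq.symm Eq.symm
  obtain ⟨d, rfl⟩ := Nat.exists_eq_add_of_le hle
  rw [pow_add, Perm.mul_apply] at heq
  have hd : b i = (σ ^ d) (b i') := (σ ^ m).injective heq
  rcases Nat.eq_zero_or_pos d with rfl | hpos
  · exact ⟨hb hd, rfl⟩
  · exact absurd ⟨i, hd⟩ (h'.notMem_range d hpos (by omega))

lemma pow_succ_apply_notMem_range (h : FirstReturn σ b i j k) (hm : 0 < m)
    (hmk : m < k) : (σ ^ (m + 1)) (b i) ∉ Set.range (σ ∘ b) := by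
  rintro ⟨l, hl⟩
  rw [pow_succ', Perm.mul_apply, Function.comp_apply] at hl
  exact h.notMem_range m hm hmk ⟨l, σ.injective hl⟩

lemma eq_of_sameCycle [Finite α] (h : FirstReturn σ b i i k) (hb : Function.Injective b)
    (hij : σ.SameCycle (b i) (b j)) : i = j := by
  obtain ⟨N, hN⟩ := hij.exists_nat_pow_eq
  have hperiod : Function.IsPeriodicPt σ k (b i) := by
    rw [Function.IsPeriodicPt, Perm.iterate_eq_pow]
    exact h.apply_eq
  rw [← Perm.iterate_eq_pow, ← hperiod.iterate_mod_apply, Perm.iterate_eq_pow] at hN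
  rcases Nat.eq_zero_or_pos (N % k) with hzero | hpos
  · rw [hzero] at hN
    exact hb hN
  · exact absurd ⟨j, hN.symm⟩ (h.notMem_range _ hpos (Nat.mod_lt _ h.pos))

end FirstReturn

lemma exists_isPath_of_injOn (G : SimpleGraph α) (x : ℕ → α) (k : ℕ)
    (hinj : Set.InjOn x (Set.Iic k)) (hadj : ∀ m < k, G.Adj (x m) (x (m + 1))) :
    ∃ w : G.Walk (x 0) (x k), w.IsPath ∧ ∀ u ∈ w.support, ∃ m ≤ k, x m = u := by
  induction k with
  | zero => exact ⟨.nil, .nil, by simp⟩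
  | succ k ih =>
    obtain ⟨w, hw, hsupport⟩ := ih (hinj.mono (Set.Iic_subset_Iic.2 k.le_succ))
      fun m hm => hadj m (hm.trans k.lt_succ_self)
    refine ⟨w.concat (hadj k k.lt_succ_self), hw.concat ?_ _, fun u hu => ?_⟩
    · intro hmem
      obtain ⟨m, hm, hxm⟩ := hsupport _ hmem
      have : m = k + 1 := hinj (Set.mem_Iic.2 (by omega)) Set.self_mem_Iic hxm
      omega
    · rw [SimpleGraph.Walk.support_concat, List.mem_append, List.mem_singleton] at hu
      rcases hu with hu | rfl
      · obtain ⟨m, hm, rfl⟩ := hsupport u hu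
        exact ⟨m, by omega, rfl⟩
      · exact ⟨k + 1, le_rfl, rfl⟩

lemma FirstReturn.exists_isPath {G : SimpleGraph α} {i j : ι} {k : ℕ}
    (h : FirstReturn σ b i j k) (hb : Function.Injective b)
    (hadj : ∀ x ∉ Set.range b, σ x = x ∨ G.Adj x (σ x)) :
    ∃ w : G.Walk (σ (b i)) (b j), w.IsPath ∧
      ∀ u ∈ w.support, ∃ m, 0 < m ∧ m ≤ k ∧ (σ ^ m) (b i) = u := by
  obtain ⟨k, rfl⟩ := Nat.exists_eq_add_one.2 h.pos
  have hinj : Set.InjOn (fun m => (σ ^ (m + 1)) (b i)) (Set.Iic k) := fun m hm m' hm' heq =>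
    Nat.succ_injective (h.eq_of_pow_apply_eq h hb m.succ_pos (Nat.succ_le_succ hm) m'.succ_pos
      (Nat.succ_le_succ hm') heq).2
  have hstep (m : ℕ) (hm : m < k) : G.Adj ((σ ^ (m + 1)) (b i)) ((σ ^ (m + 1 + 1)) (b i)) := by
    have hmoved : (σ ^ (m + 1 + 1)) (b i) ≠ (σ ^ (m + 1)) (b i) := fun heq => by
      have := hinj (Set.mem_Iic.2 hm) (Set.mem_Iic.2 hm.le) heq
      omega
    rw [pow_succ' σ (m + 1), Perm.mul_apply] at hmoved ⊢
    exact (hadj _ (h.notMem_range _ m.succ_pos (Nat.succ_lt_succ hm))).resolve_left hmoved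
  obtain ⟨w, hw, hsupport⟩ := exists_isPath_of_injOn G _ k hinj hstep
  refine ⟨w.copy (by simp) h.apply_eq, by simpa using hw, fun u hu => ?_⟩
  rw [SimpleGraph.Walk.support_copy] at hu
  obtain ⟨m, hm, rfl⟩ := hsupport u hu
  exact ⟨m + 1, m.succ_pos, Nat.succ_le_succ hm, rfl⟩

lemma FirstReturn.disjointPaths {G : SimpleGraph α} {S : Set α} {i j i' j' : ι} {k k' : ℕ}
    (h : FirstReturn σ b i j k) (h' : FirstReturn σ b i' j' k') (hi : i ≠ i')
    (hb : Function.Injective b) (hadj : ∀ x ∉ Set.range b, σ x = x ∨ G.Adj x (σ x))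
    (hS : S ⊆ Set.range (σ ∘ b) ∪ Set.range b) :
    DisjointPaths G S (σ (b i)) (b j) (σ (b i')) (b j') := by
  have hinternal {i j : ι} {k m : ℕ} (h : FirstReturn σ b i j k) (hm : 0 < m) (hmk : m ≤ k)
      (hstart : (σ ^ m) (b i) ≠ σ (b i)) (hend : (σ ^ m) (b i) ≠ b j) :
      (σ ^ m) (b i) ∉ S := by
    have hm1 : m ≠ 1 := by rintro rfl; exact hstart (by rw [pow_one])
    have hmk' : m ≠ k := by rintro rfl; exact hend h.apply_eq
    intro hmem
    rcases hS hmem with hσb | hb'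
    · obtain ⟨m, rfl⟩ := Nat.exists_eq_add_one.2 hm
      exact h.pow_succ_apply_notMem_range (by omega) (by omega) hσb
    · exact h.notMem_range m hm (by omega) hb'
  obtain ⟨w, hw, hsupport⟩ := h.exists_isPath hb hadj
  obtain ⟨w', hw', hsupport'⟩ := h'.exists_isPath hb hadj
  refine ⟨w, w', hw, hw', fun u hu hu' => ?_, fun u hu => ?_, fun u hu => ?_⟩
  · obtain ⟨m, hm, hmk, rfl⟩ := hsupport u hu
    obtain ⟨m', hm', hmk', heq⟩ := hsupport' _ hu'
    exact hi (h'.eq_of_pow_apply_eq h hb hm' hmk' hm hmk heq).1.symm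
  · obtain ⟨m, hm, hmk, rfl⟩ := hsupport u hu
    exact hinternal h hm hmk
  · obtain ⟨m, hm, hmk, rfl⟩ := hsupport' u hu
    exact hinternal h' hm hmk

/-- The first-return map on indices is injective, and a descent of it would give two crossing
paths; so it is strictly monotone, hence the identity. -/
theorem eq_of_sameCycle_of_noncrossing [Finite α] [Finite ι] [LinearOrder ι] {G : SimpleGraph α}
    {S : Set α} (hb : Function.Injective b)
    (hadj : ∀ x ∉ Set.range b, σ x = x ∨ G.Adj x (σ x))
    (hS : S ⊆ Set.range (σ ∘ b) ∪ Set.range b)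
    (hnc : ∀ ⦃i k : ι⦄, i < k → ∀ ⦃l m : ι⦄, l < m →
      ¬ DisjointPaths G S (σ (b i)) (b m) (σ (b k)) (b l))
    {i j : ι} (hij : σ.SameCycle (b i) (b j)) : i = j := by
  choose next time hnext using exists_firstReturn σ b
  have hmono : StrictMono next := by
    intro i k hik
    by_contra! hle
    rcases hle.lt_or_eq with hlt | heq
    · exact hnc hik hlt ((hnext i).disjointPaths (hnext k) hik.ne hb hadj hS)
    · have hmeet : (σ ^ time i) (b i) = (σ ^ time k) (b k) := by
        rw [(hnext i).apply_eq, (hnext k).apply_eq, heq]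
      exact hik.ne ((hnext i).eq_of_pow_apply_eq (hnext k) hb (hnext i).pos le_rfl
        (hnext k).pos le_rfl hmeet).1
  have hid : next i = i := le_antisymm hmono.apply_le hmono.le_apply
  have hreturn := hnext i
  rw [hid] at hreturn
  exact hreturn.eq_of_sameCycle hb hij

end FirstReturns

section PartnerPermutations

variable {α : Type*} {G : SimpleGraph α} {s : Finset α} {p : Perm α}

/-- A perfect matching of the subgraph of `G` induced on `s`, encoded as the involution that
exchanges matched vertices and fixes the vertices outside `s`. -/
structure IsPartnerPerm (G : SimpleGraph α) (s : Finset α) (p : Perm α) : Prop where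
  apply_apply : ∀ x, p (p x) = x
  adj : ∀ x ∈ s, G.Adj x (p x)
  fixed : ∀ x ∉ s, p x = x

namespace IsPartnerPerm

lemma apply_mem (hp : IsPartnerPerm G s p) {x : α} (hx : x ∈ s) : p x ∈ s := by
  by_contra hpx
  have hfixed := hp.fixed _ hpx
  rw [hp.apply_apply] at hfixed
  exact (hp.adj x hx).ne hfixed

lemma fixed_or_adj (hp : IsPartnerPerm G s p) (x : α) : p x = x ∨ G.Adj x (p x) := by
  by_cases hx : x ∈ s
  · exact Or.inr (hp.adj x hx)
  · exact Or.inl (hp.fixed x hx)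

variable [DecidableEq α]

lemma mk_mem_image_iff (hp : IsPartnerPerm G s p) {x y : α} :
    s(x, y) ∈ s.image (fun z => s(z, p z)) ↔ x ∈ s ∧ y = p x := by
  rw [Finset.mem_image]
  constructor
  · rintro ⟨z, hz, heq⟩
    rcases Sym2.eq_iff.1 heq with ⟨rfl, rfl⟩ | ⟨rfl, rfl⟩
    · exact ⟨hz, rfl⟩
    · exact ⟨hp.apply_mem hz, (hp.apply_apply z).symm⟩
  · rintro ⟨hx, rfl⟩
    exact ⟨x, hx, rfl⟩

lemma isPMOn_image (hp : IsPartnerPerm G s p) : IsPMOn G s (s.image fun x => s(x, p x)) := by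
  constructor
  · rintro e he
    obtain ⟨x, hx, rfl⟩ := Finset.mem_image.1 he
    refine ⟨hp.adj x hx, fun v hv => ?_⟩
    rcases Sym2.mem_iff.1 hv with rfl | rfl
    exacts [hx, hp.apply_mem hx]
  · refine fun v hv => ⟨s(v, p v), ⟨hp.mk_mem_image_iff.2 ⟨hv, rfl⟩, Sym2.mem_mk_left _ _⟩, ?_⟩
    rintro e ⟨he, hve⟩
    obtain ⟨y, rfl⟩ := Sym2.mem_iff_exists.1 hve
    rw [(hp.mk_mem_image_iff.1 he).2]

lemma eq_of_image_eq {q : Perm α} (hp : IsPartnerPerm G s p) (hq : IsPartnerPerm G s q)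
    (heq : (s.image fun x => s(x, p x)) = s.image fun x => s(x, q x)) : p = q := by
  ext x
  by_cases hx : x ∈ s
  · have hmem := hp.mk_mem_image_iff.2 ⟨hx, rfl⟩
    rw [heq] at hmem
    exact (hq.mk_mem_image_iff.1 hmem).2
  · rw [hp.fixed x hx, hq.fixed x hx]

end IsPartnerPerm

lemma exists_isPartnerPerm_of_isPMOn [DecidableEq α] {m : Finset (Sym2 α)} (hm : IsPMOn G s m) :
    ∃ p, IsPartnerPerm G s p ∧ (s.image fun x => s(x, p x)) = m := by
  have hpartner (x : α) : ∃ y, (x ∈ s → s(x, y) ∈ m) ∧ (x ∉ s → y = x) := by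
    by_cases hx : x ∈ s
    · obtain ⟨e, ⟨he, hxe⟩, -⟩ := hm.2 x hx
      obtain ⟨y, rfl⟩ := Sym2.mem_iff_exists.1 hxe
      exact ⟨y, fun _ => he, fun hx' => absurd hx hx'⟩
    · exact ⟨x, fun hx' => absurd hx' hx, fun _ => rfl⟩
  choose partner hedge hfixed using hpartner
  have huniq {x y : α} (hxy : s(x, y) ∈ m) : x ∈ s ∧ y = partner x := by
    have hx : x ∈ s := (hm.1 _ hxy).2 x (Sym2.mem_mk_left _ _)
    exact ⟨hx, Sym2.congr_right.1 ((hm.2 x hx).unique ⟨hxy, Sym2.mem_mk_left _ _⟩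
      ⟨hedge x hx, Sym2.mem_mk_left _ _⟩)⟩
  have hinvol : Function.Involutive partner := fun x => by
    by_cases hx : x ∈ s
    · exact (huniq (Sym2.eq_swap ▸ hedge x hx)).2.symm
    · rw [hfixed x hx, hfixed x hx]
  have hp : IsPartnerPerm G s hinvol.toPerm :=
    ⟨hinvol, fun x hx => (hm.1 _ (hedge x hx)).1, hfixed⟩
  refine ⟨_, hp, Finset.ext fun e => ?_⟩
  induction e with
  | _ x y =>
    rw [hp.mk_mem_image_iff]
    exact ⟨fun ⟨hx, hy⟩ => hy ▸ hedge x hx, huniq⟩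

theorem pmCount_eq_card_isPartnerPerm (G : SimpleGraph α) (s : Finset α) :
    pmCount G s = Nat.card {p : Perm α // IsPartnerPerm G s p} := by
  classical
  refine (Nat.card_eq_of_bijective
    (fun p : {p // IsPartnerPerm G s p} => (⟨_, p.2.isPMOn_image⟩ : {m // IsPMOn G s m}))
    ⟨fun p q heq => ?_, fun ⟨m, hm⟩ => ?_⟩).symm
  · exact Subtype.ext (p.2.eq_of_image_eq q.2 (congrArg Subtype.val heq))
  · obtain ⟨p, hp, rfl⟩ := exists_isPartnerPerm_of_isPMOn hm
    exact ⟨⟨p, hp⟩, rfl⟩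

end PartnerPermutations

section AlternatingPermutations

variable {α ι : Type*} {G : SimpleGraph α} {U : Set α} {s t : Finset α} {p₀ p ρ : Perm α}
  {a b : ι → α}

/-- In the bipartite graph `G` with colour classes `U` and `Uᶜ`, the perfect matching `p₀` of `s`
is compared with the perfect matchings of `t`, where `s` and `t` differ exactly in the terminals
`a i` and `b j`. The superposition of the two matchings contains a path starting at each `a i`; the
colours of the terminals are such that, directed away from `a i`, it leaves `U` along edges of the
matching of `t` and leaves `Uᶜ` along edges of `p₀`. -/
structure Terminals (G : SimpleGraph α) (U : Set α) (s t : Finset α) (p₀ : Perm α)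
    (a b : ι → α) : Prop where
  bipartite : ∀ ⦃x y⦄, G.Adj x y → (x ∈ U ↔ y ∉ U)
  partner : IsPartnerPerm G s p₀
  source_injective : Function.Injective a
  sink_injective : Function.Injective b
  source_ne_sink : ∀ i j, a i ≠ b j
  source_mem_iff : ∀ i, a i ∈ s ↔ a i ∉ U
  sink_mem_iff : ∀ j, b j ∈ s ↔ b j ∈ U
  mem_iff : ∀ x, x ∈ t ↔ (x ∈ s ↔ x ∉ Set.range a ∧ x ∉ Set.range b)

/-- A permutation that follows an edge of `G` or of the matching `p₀` on `U`, follows `p₀` on `Uᶜ`,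
and jumps from `b j` to `a j`. The cycles through the `b j` are the paths of the superposition of
`p₀` with a second matching, closed up by the jumps. -/
structure IsAlternatingPerm (G : SimpleGraph α) (U : Set α) (p₀ : Perm α) (a b : ι → α)
    (ρ : Perm α) : Prop where
  apply_sink : ∀ j, ρ (b j) = a j
  partner_or_adj : ∀ x ∉ Set.range b, ρ x = p₀ x ∨ x ∈ U ∧ G.Adj x (ρ x)

lemma IsAlternatingPerm.apply_of_notMem (hρ : IsAlternatingPerm G U p₀ a b ρ) {x : α}
    (hx : x ∉ U) (hxb : x ∉ Set.range b) : ρ x = p₀ x :=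
  (hρ.partner_or_adj x hxb).resolve_right fun h => hx h.1

open Classical in
/-- The permutation associated with a matching `p` of `t`: it follows `p` on `U` and `p₀` on `Uᶜ`,
and jumps from `b j` to `a j`. -/
noncomputable def alternatingMap (U : Set α) (a b : ι → α) (p p₀ : Perm α) : α → α :=
  Function.extend b a fun x => if x ∈ U then p x else p₀ x

open Classical in
/-- The matching of `t` associated with a permutation `ρ`: each vertex of `U` is matched with its
image under `ρ`. -/
noncomputable def partnerMap (U : Set α) (t : Finset α) (ρ : Perm α) (x : α) : α :=
  if x ∈ t then if x ∈ U then ρ x else ρ.symm x else x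

lemma alternatingMap_sink (hb : Function.Injective b) (j : ι) :
    alternatingMap U a b p p₀ (b j) = a j :=
  hb.extend_apply _ _ j

lemma alternatingMap_of_mem {x : α} (hxb : x ∉ Set.range b) (hx : x ∈ U) :
    alternatingMap U a b p p₀ x = p x := by
  rw [alternatingMap, Function.extend_apply' _ _ _ hxb, if_pos hx]

lemma alternatingMap_of_notMem {x : α} (hxb : x ∉ Set.range b) (hx : x ∉ U) :
    alternatingMap U a b p p₀ x = p₀ x := by
  rw [alternatingMap, Function.extend_apply' _ _ _ hxb, if_neg hx]

namespace Terminals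

/-- Reversing all paths exchanges the colour classes and the two families of terminals. -/
lemma swap (h : Terminals G U s t p₀ a b) : Terminals G Uᶜ s t p₀ b a where
  bipartite x y hxy := not_congr (h.bipartite hxy)
  partner := h.partner
  source_injective := h.sink_injective
  sink_injective := h.source_injective
  source_ne_sink i j := (h.source_ne_sink j i).symm
  source_mem_iff j := by rw [h.sink_mem_iff, Set.notMem_compl_iff]
  sink_mem_iff := h.source_mem_iff
  mem_iff x := by rw [h.mem_iff, and_comm]

lemma notMem_range_sink (h : Terminals G U s t p₀ a b) {x : α} (hx : x ∈ U) (hxt : x ∈ t) :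
    x ∉ Set.range b := by
  rintro ⟨j, rfl⟩
  exact (((h.mem_iff _).1 hxt).1 ((h.sink_mem_iff j).2 hx)).2 ⟨j, rfl⟩

lemma notMem_range_source (h : Terminals G U s t p₀ a b) {x : α} (hx : x ∈ U) (hxs : x ∈ s) :
    x ∉ Set.range a := by
  rintro ⟨i, rfl⟩
  exact (h.source_mem_iff i).1 hxs hx

lemma notMem_source_iff_notMem_sink (h : Terminals G U s t p₀ a b) {x : α} (hx : x ∈ U) :
    x ∉ s ∧ x ∉ Set.range a ↔ x ∉ t ∧ x ∉ Set.range b := by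
  have hsource : x ∈ Set.range a → x ∉ s := fun hxa hxs => h.notMem_range_source hx hxs hxa
  have hsink : x ∈ Set.range b → x ∈ s := by
    rintro ⟨j, rfl⟩
    exact (h.sink_mem_iff j).2 hx
  have := h.mem_iff x
  tauto

lemma alternatingMap_leftInverse (h : Terminals G U s t p₀ a b) (hp : IsPartnerPerm G t p) :
    Function.LeftInverse (alternatingMap Uᶜ b a p p₀) (alternatingMap U a b p p₀) := by
  intro x
  by_cases hxb : x ∈ Set.range b
  · obtain ⟨j, rfl⟩ := hxb
    rw [alternatingMap_sink h.sink_injective, alternatingMap_sink h.source_injective]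
  by_cases hx : x ∈ U
  · rw [alternatingMap_of_mem hxb hx]
    by_cases hxt : x ∈ t
    · have hpx : p x ∉ U := (h.bipartite (hp.adj x hxt)).1 hx
      rw [alternatingMap_of_mem (h.swap.notMem_range_sink hpx (hp.apply_mem hxt)) hpx,
        hp.apply_apply]
    · obtain ⟨hxs, hxa⟩ := (h.notMem_source_iff_notMem_sink hx).2 ⟨hxt, hxb⟩
      rw [hp.fixed x hxt, alternatingMap_of_notMem hxa (not_not.2 hx), h.partner.fixed x hxs]
  · rw [alternatingMap_of_notMem hxb hx]
    by_cases hxs : x ∈ s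
    · have hpx : p₀ x ∈ U := not_not.1 ((h.swap.bipartite (h.partner.adj x hxs)).1 hx)
      rw [alternatingMap_of_notMem (h.notMem_range_source hpx (h.partner.apply_mem hxs))
        (not_not.2 hpx), h.partner.apply_apply]
    · obtain ⟨hxt, hxa⟩ := (h.swap.notMem_source_iff_notMem_sink hx).1 ⟨hxs, hxb⟩
      rw [h.partner.fixed x hxs, alternatingMap_of_mem hxa hx, hp.fixed x hxt]

/-- `alternatingMap` as a permutation; its inverse is obtained by reversing all paths. -/
noncomputable def alternatingPerm (h : Terminals G U s t p₀ a b) (hp : IsPartnerPerm G t p) :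
    Perm α where
  toFun := alternatingMap U a b p p₀
  invFun := alternatingMap Uᶜ b a p p₀
  left_inv := h.alternatingMap_leftInverse hp
  right_inv := by
    have hleft := h.swap.alternatingMap_leftInverse hp
    rwa [compl_compl] at hleft

lemma isAlternatingPerm_alternatingPerm (h : Terminals G U s t p₀ a b)
    (hp : IsPartnerPerm G t p) : IsAlternatingPerm G U p₀ a b (h.alternatingPerm hp) where
  apply_sink := alternatingMap_sink h.sink_injective
  partner_or_adj x hxb := by
    change alternatingMap U a b p p₀ x = _ ∨ _ ∧ G.Adj x (alternatingMap U a b p p₀ x)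
    by_cases hx : x ∈ U
    · rw [alternatingMap_of_mem hxb hx]
      by_cases hxt : x ∈ t
      · exact Or.inr ⟨hx, hp.adj x hxt⟩
      · obtain ⟨hxs, -⟩ := (h.notMem_source_iff_notMem_sink hx).2 ⟨hxt, hxb⟩
        exact Or.inl (by rw [hp.fixed x hxt, h.partner.fixed x hxs])
    · exact Or.inl (alternatingMap_of_notMem hxb hx)

lemma alternatingPerm_injective (h : Terminals G U s t p₀ a b) {q : Perm α}
    (hp : IsPartnerPerm G t p) (hq : IsPartnerPerm G t q)
    (heq : h.alternatingPerm hp = h.alternatingPerm hq) : p = q := by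
  have hU {x : α} (hx : x ∈ U) (hxt : x ∈ t) : p x = q x := by
    have hxb := h.notMem_range_sink hx hxt
    rw [← alternatingMap_of_mem (a := a) (p₀ := p₀) hxb hx,
      ← alternatingMap_of_mem (a := a) (p₀ := p₀) hxb hx]
    exact Equiv.congr_fun heq x
  ext x
  by_cases hxt : x ∈ t
  · by_cases hx : x ∈ U
    · exact hU hx hxt
    · have hpx : p x ∈ U := not_not.1 ((h.swap.bipartite (hp.adj x hxt)).1 hx)
      rw [← hq.apply_apply (p x), ← hU hpx (hp.apply_mem hxt), hp.apply_apply]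
  · rw [hp.fixed x hxt, hq.fixed x hxt]

lemma isAlternatingPerm_symm (h : Terminals G U s t p₀ a b) (hρ : IsAlternatingPerm G U p₀ a b ρ) :
    IsAlternatingPerm G Uᶜ p₀ b a ρ.symm where
  apply_sink j := ρ.symm_apply_eq.2 (hρ.apply_sink j).symm
  partner_or_adj y hya := by
    obtain ⟨x, rfl⟩ := ρ.surjective y
    rw [Equiv.symm_apply_apply]
    have hxb : x ∉ Set.range b := by
      rintro ⟨j, rfl⟩
      exact hya ⟨j, (hρ.apply_sink j).symm⟩
    refine (hρ.partner_or_adj x hxb).imp (fun hx => ?_) fun ⟨hx, hadj⟩ => ?_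
    · rw [hx, h.partner.apply_apply]
    · exact ⟨(h.bipartite hadj).1 hx, hadj.symm⟩

lemma adj_and_mem_of_isAlternatingPerm (h : Terminals G U s t p₀ a b)
    (hρ : IsAlternatingPerm G U p₀ a b ρ) {x : α} (hx : x ∈ U) (hxt : x ∈ t) :
    G.Adj x (ρ x) ∧ ρ x ∈ t := by
  have hxb : x ∉ Set.range b := h.notMem_range_sink hx hxt
  have hadj : G.Adj x (ρ x) := by
    rcases hρ.partner_or_adj x hxb with heq | ⟨-, hadj⟩
    · rw [heq]
      refine h.partner.adj x (by_contra fun hxs => ?_)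
      obtain ⟨i, rfl⟩ : x ∈ Set.range a := by_contra fun hxa =>
        ((h.notMem_source_iff_notMem_sink hx).1 ⟨hxs, hxa⟩).1 hxt
      rw [h.partner.fixed _ hxs] at heq
      exact hxb ⟨i, ρ.injective ((hρ.apply_sink i).trans heq.symm)⟩
    · exact hadj
  refine ⟨hadj, by_contra fun hρt => ?_⟩
  have hρU : ρ x ∉ U := (h.bipartite hadj).1 hx
  have hρa : ρ x ∉ Set.range a := by
    rintro ⟨i, hi⟩
    exact hxb ⟨i, ρ.injective ((hρ.apply_sink i).trans hi)⟩
  obtain ⟨hρs, hρb⟩ := (h.swap.notMem_source_iff_notMem_sink hρU).2 ⟨hρt, hρa⟩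
  have hfixed : ρ (ρ x) = ρ x := by rw [hρ.apply_of_notMem hρU hρb, h.partner.fixed _ hρs]
  exact hadj.ne (ρ.injective hfixed).symm

lemma partnerMap_involutive (h : Terminals G U s t p₀ a b)
    (hρ : IsAlternatingPerm G U p₀ a b ρ) : Function.Involutive (partnerMap U t ρ) := by
  intro x
  by_cases hxt : x ∈ t
  · by_cases hx : x ∈ U
    · obtain ⟨hadj, hρt⟩ := h.adj_and_mem_of_isAlternatingPerm hρ hx hxt
      have hρU : ρ x ∉ U := (h.bipartite hadj).1 hx
      simp [partnerMap, hxt, hx, hρt, hρU]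
    · obtain ⟨hadj, hρt⟩ :=
        h.swap.adj_and_mem_of_isAlternatingPerm (h.isAlternatingPerm_symm hρ) hx hxt
      have hρU : ρ.symm x ∈ U := not_not.1 ((h.swap.bipartite hadj).1 hx)
      simp [partnerMap, hxt, hx, hρt, hρU]
  · simp [partnerMap, hxt]

lemma isPartnerPerm_partnerMap (h : Terminals G U s t p₀ a b)
    (hρ : IsAlternatingPerm G U p₀ a b ρ) :
    IsPartnerPerm G t (h.partnerMap_involutive hρ).toPerm where
  apply_apply := h.partnerMap_involutive hρ
  adj x hxt := by
    rw [Function.Involutive.coe_toPerm, partnerMap, if_pos hxt]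
    split_ifs with hx
    · exact (h.adj_and_mem_of_isAlternatingPerm hρ hx hxt).1
    · exact (h.swap.adj_and_mem_of_isAlternatingPerm (h.isAlternatingPerm_symm hρ) hx hxt).1
  fixed _ hxt := if_neg hxt

lemma alternatingPerm_partnerMap (h : Terminals G U s t p₀ a b)
    (hρ : IsAlternatingPerm G U p₀ a b ρ) :
    h.alternatingPerm (h.isPartnerPerm_partnerMap hρ) = ρ := by
  ext x
  change alternatingMap U a b _ p₀ x = ρ x
  by_cases hxb : x ∈ Set.range b
  · obtain ⟨j, rfl⟩ := hxb
    rw [alternatingMap_sink h.sink_injective, hρ.apply_sink]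
  by_cases hx : x ∈ U
  · rw [alternatingMap_of_mem hxb hx, Function.Involutive.coe_toPerm, partnerMap]
    split_ifs with hxt
    · rfl
    · obtain ⟨hxs, hxa⟩ := (h.notMem_source_iff_notMem_sink hx).2 ⟨hxt, hxb⟩
      rw [← ρ.symm_apply_eq, (h.isAlternatingPerm_symm hρ).apply_of_notMem (not_not.2 hx) hxa,
        h.partner.fixed x hxs]
  · rw [alternatingMap_of_notMem hxb hx, hρ.apply_of_notMem hx hxb]

theorem pmCount_eq_card_isAlternatingPerm (h : Terminals G U s t p₀ a b) :
    pmCount G t = Nat.card {ρ : Perm α // IsAlternatingPerm G U p₀ a b ρ} := by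
  rw [pmCount_eq_card_isPartnerPerm]
  exact Nat.card_eq_of_bijective
    (fun p => ⟨h.alternatingPerm p.2, h.isAlternatingPerm_alternatingPerm p.2⟩)
    ⟨fun p q heq => Subtype.ext (h.alternatingPerm_injective p.2 q.2 (congrArg Subtype.val heq)),
      fun ρ => ⟨⟨_, h.isPartnerPerm_partnerMap ρ.2⟩,
        Subtype.ext (h.alternatingPerm_partnerMap ρ.2)⟩⟩

end Terminals

end AlternatingPermutations

section MatchingCounts

variable {α ι K : Type*} {G : SimpleGraph α} {U : Set α} {s t : Finset α} {p₀ ρ : Perm α}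
  {a b : ι → α}

/-- The digraph obtained from the bipartite graph `G` by directing its edges out of `U` and
contracting the edges of the matching `p₀`. -/
def contractedArc (G : SimpleGraph α) (U : Set α) (p₀ : Perm α) (x y : α) : Prop :=
  x ∈ U ∧ G.Adj x (p₀ y)

/-- No path of `G` from `a i` to `b m` is disjoint from a path from `a k` to `b l` if `i < k` but
`l < m`, where the internal vertices of the paths are not terminals. -/
def Noncrossing [LT ι] (G : SimpleGraph α) (a b : ι → α) : Prop :=
  ∀ ⦃i k⦄, i < k → ∀ ⦃l m⦄, l < m →
    ¬ DisjointPaths G (Set.range a ∪ Set.range b) (a i) (b m) (a k) (b l)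

lemma noncrossing_of_subsingleton [Preorder ι] [Subsingleton ι] : Noncrossing G a b :=
  fun i k hik => absurd (Subsingleton.elim i k) hik.ne

lemma noncrossing_of_noncrossingList {n : ℕ} {a b : Fin n → α}
    (hnc : NoncrossingList G (List.ofFn a ++ (List.ofFn b).reverse)) : Noncrossing G a b := by
  intro i k hik l m hlm
  have hterminals : {x | x ∈ List.ofFn a ++ (List.ofFn b).reverse} = Set.range a ∪ Set.range b := by
    ext x
    simp [List.mem_ofFn]
  have hlength : (List.ofFn a ++ (List.ofFn b).reverse).length = n + n := by simp
  have hget_a (i : Fin n) (hi) : (List.ofFn a ++ (List.ofFn b).reverse).get ⟨i, hi⟩ = a i := by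
    simp
  have hget_b (j : Fin n) (hj) :
      (List.ofFn a ++ (List.ofFn b).reverse).get ⟨n + j.rev, hj⟩ = b j := by
    have hrev : n - 1 - (n - (j + 1)) = j := by omega
    simp [hrev]
  have := hnc ⟨i, by omega⟩ ⟨k, by omega⟩ ⟨n + m.rev, by omega⟩ ⟨n + l.rev, by omega⟩
    hik (Fin.mk_lt_mk.2 (by omega)) (Fin.mk_lt_mk.2 (by have := Fin.rev_lt_rev.2 hlm; omega))
  rwa [hget_a, hget_a, hget_b, hget_b, hterminals] at this

lemma isPathSystem_mul_iff_isAlternatingPerm (hp₀ : Function.Involutive p₀) :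
    IsPathSystem (contractedArc G U p₀) (p₀ ∘ a) b (p₀ * ρ) ↔ IsAlternatingPerm G U p₀ a b ρ := by
  have hsink (j : ι) : (p₀ * ρ) (b j) = (p₀ ∘ a) j ↔ ρ (b j) = a j := p₀.injective.eq_iff
  have hstep (x : α) : (p₀ * ρ) x = x ∨ contractedArc G U p₀ x ((p₀ * ρ) x) ↔
      ρ x = p₀ x ∨ x ∈ U ∧ G.Adj x (ρ x) := by
    rw [contractedArc, Perm.mul_apply, hp₀, hp₀.eq_iff]
  exact ⟨fun h => ⟨fun j => (hsink j).1 (h.1 j), fun x hx => (hstep x).1 (h.2 x hx)⟩,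
    fun h => ⟨fun j => (hsink j).2 (h.1 j), fun x hx => (hstep x).2 (h.2 x hx)⟩⟩

lemma sameCycle_of_forall_sameCycle_apply [Finite α] {σ τ : Perm α}
    (hstep : ∀ x, σ.SameCycle x (τ x)) {x y : α} (hxy : τ.SameCycle x y) : σ.SameCycle x y := by
  obtain ⟨n, rfl⟩ := hxy.exists_nat_pow_eq
  induction n with
  | zero => exact Perm.SameCycle.refl σ x
  | succ n ih =>
    rw [pow_succ', Perm.mul_apply]
    exact (ih ⟨n, rfl⟩).trans (hstep _)

namespace Terminals

lemma empty (h : Terminals G U s t p₀ a b) :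
    Terminals G U s s p₀ (Empty.elim : Empty → α) Empty.elim where
  bipartite := h.bipartite
  partner := h.partner
  source_injective := Function.injective_of_subsingleton _
  sink_injective := Function.injective_of_subsingleton _
  source_ne_sink i := i.elim
  source_mem_iff i := i.elim
  sink_mem_iff j := j.elim
  mem_iff x := by simp

lemma single [DecidableEq α] (h : Terminals G U s t p₀ a b) (i j : ι) :
    Terminals G U s (symmDiff s {a i, b j}) p₀ (fun _ : Unit => a i) (fun _ : Unit => b j) where
  bipartite := h.bipartite
  partner := h.partner
  source_injective := Function.injective_of_subsingleton _
  sink_injective := Function.injective_of_subsingleton _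
  source_ne_sink _ _ := h.source_ne_sink i j
  source_mem_iff _ := h.source_mem_iff i
  sink_mem_iff _ := h.sink_mem_iff j
  mem_iff x := by
    simp only [Finset.mem_symmDiff, Finset.mem_insert, Finset.mem_singleton, Set.range_const,
      Set.mem_singleton_iff]
    tauto

theorem pmCount_eq_card_isPathSystem (h : Terminals G U s t p₀ a b) :
    pmCount G t =
      Nat.card {τ : Perm α // IsPathSystem (contractedArc G U p₀) (p₀ ∘ a) b τ} := by
  rw [h.pmCount_eq_card_isAlternatingPerm]
  exact Nat.card_congr ((Equiv.mulLeft p₀).subtypeEquiv fun _ =>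
    (isPathSystem_mul_iff_isAlternatingPerm h.partner.apply_apply).symm)

lemma cycleFree_contractedArc (h : Terminals G U s t p₀ a b) (hs : pmCount G s = 1) :
    CycleFree (contractedArc G U p₀) := by
  intro σ hσ
  rw [h.empty.pmCount_eq_card_isPathSystem, Nat.card_eq_one_iff_unique] at hs
  have hσ_system : IsPathSystem (contractedArc G U p₀) (p₀ ∘ Empty.elim) Empty.elim σ :=
    ⟨fun j => j.elim, fun x _ => hσ x⟩
  have hone_system : IsPathSystem (contractedArc G U p₀) (p₀ ∘ Empty.elim) Empty.elim 1 :=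
    ⟨fun j => j.elim, fun _ _ => Or.inl rfl⟩
  exact congrArg Subtype.val (hs.1.elim ⟨σ, hσ_system⟩ ⟨1, hone_system⟩)

lemma sameCycle_mul_apply (h : Terminals G U s t p₀ a b) (hρ : IsAlternatingPerm G U p₀ a b ρ)
    (x : α) : ρ.SameCycle x ((p₀ * ρ) x) := by
  have hpartner {y : α} (hy : y ∉ U) : ρ.SameCycle y (p₀ y) := by
    by_cases hyb : y ∈ Set.range b
    · obtain ⟨j, rfl⟩ := hyb
      rw [h.partner.fixed _ (mt (h.sink_mem_iff j).1 hy)]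
    · rw [← hρ.apply_of_notMem hy hyb]
      exact Perm.sameCycle_apply_right.2 (Perm.SameCycle.refl _ _)
  rw [Perm.mul_apply, ← Perm.sameCycle_apply_left]
  by_cases hρx : ρ x ∈ U
  · by_cases hxb : x ∈ Set.range b
    · obtain ⟨j, rfl⟩ := hxb
      rw [hρ.apply_sink] at hρx ⊢
      rw [h.partner.fixed _ (mt (h.source_mem_iff j).1 (not_not.2 hρx))]
    · have heq : ρ x = p₀ x := (hρ.partner_or_adj x hxb).resolve_right fun ⟨hx, hadj⟩ =>
        (h.bipartite hadj).1 hx hρx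
      rw [Perm.sameCycle_apply_left, heq, h.partner.apply_apply]
  · exact hpartner hρx

lemma eq_of_sameCycle [Finite α] [Finite ι] [LinearOrder ι] (h : Terminals G U s t p₀ a b)
    (hnc : Noncrossing G a b) {τ : Perm α}
    (hτ : IsPathSystem (contractedArc G U p₀) (p₀ ∘ a) b τ) {i j : ι}
    (hij : τ.SameCycle (b i) (b j)) : i = j := by
  obtain ⟨ρ, rfl⟩ := (Equiv.mulLeft p₀).surjective τ
  have hρ := (isPathSystem_mul_iff_isAlternatingPerm h.partner.apply_apply).1 hτ
  have hsource : ρ ∘ b = a := funext hρ.apply_sink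
  refine eq_of_sameCycle_of_noncrossing (G := G) (S := Set.range a ∪ Set.range b)
    h.sink_injective (fun x hx => ?_) (by rw [hsource]) ?_
    (sameCycle_of_forall_sameCycle_apply (h.sameCycle_mul_apply hρ) hij)
  · rcases hρ.partner_or_adj x hx with heq | ⟨-, hadj⟩
    · rw [heq]
      exact h.partner.fixed_or_adj x
    · exact Or.inr hadj
  · simp only [hρ.apply_sink]
    exact hnc

variable [DecidableEq α] [LinearOrder ι] [CommRing K]

theorem det_pathMatrix_contractedArc [Fintype α] [Finite ι] (h : Terminals G U s t p₀ a b)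
    (hs : pmCount G s = 1) (hnc : Noncrossing G a b) :
    (pathMatrix K (contractedArc G U p₀) (p₀ ∘ a) b).det = pmCount G t := by
  rw [det_pathMatrix h.sink_injective (h.cycleFree_contractedArc hs)
    fun _ hτ _ _ hij => h.eq_of_sameCycle hnc hτ hij, h.pmCount_eq_card_isPathSystem]

theorem pmCount_eq_det [Finite α] [Fintype ι] (h : Terminals G U s t p₀ a b) (hs : pmCount G s = 1)
    (hnc : Noncrossing G a b) :
    (pmCount G t : K) =
      Matrix.det (Matrix.of fun i j => (pmCount G (symmDiff s {a i, b j}) : K)) := by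
  have := Fintype.ofFinite α
  have hdet : (arcMatrix K (contractedArc G U p₀)).det = 1 := by
    rw [← pathMatrix_of_isEmpty (b := Empty.elim), h.empty.det_pathMatrix_contractedArc hs
      noncrossing_of_subsingleton, hs, Nat.cast_one]
  have hentry (i j : ι) : (pmCount G (symmDiff s {a i, b j}) : K) =
      ((arcMatrix K (contractedArc G U p₀)).updateRow (b j) (Pi.single (p₀ (a i)) 1)).det := by
    rw [← pathMatrix_unit]
    exact ((h.single i j).det_pathMatrix_contractedArc hs noncrossing_of_subsingleton).symm
  simp_rw [hentry]
  rw [← h.det_pathMatrix_contractedArc hs hnc, pathMatrix, det_extend_row hdet h.sink_injective]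
  rfl

end Terminals

lemma mem_right_iff_notMem_left [Fintype α] [DecidableEq α] {U V : Finset α}
    (hbip : IsBipartition G U V) (x : α) : x ∈ V ↔ x ∉ U := by
  have hcover : x ∈ U ∪ V := hbip.2.1 ▸ Finset.mem_univ x
  exact ⟨fun hV hU => Finset.disjoint_left.1 hbip.1 hU hV, (Finset.mem_union.1 hcover).resolve_left⟩

lemma terminals_of_isBipartition [Fintype α] [DecidableEq α] {U V A B : Finset α}
    (hbip : IsBipartition G U V) (hA : ∀ x, x ∈ A ↔ x ∈ Set.range a)
    (hB : ∀ x, x ∈ B ↔ x ∈ Set.range b) (ha : Function.Injective a) (hb : Function.Injective b)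
    (hab : ∀ i j, a i ≠ b j)
    (hp₀ : IsPartnerPerm G (Finset.univ \ ((A ∩ U) ∪ (B ∩ V))) p₀) :
    Terminals G (U : Set α) (Finset.univ \ ((A ∩ U) ∪ (B ∩ V)))
      (Finset.univ \ ((A ∩ V) ∪ (B ∩ U))) p₀ a b where
  bipartite x y hxy := by
    have := hbip.2.2 hxy
    simp only [mem_right_iff_notMem_left hbip] at this
    simp only [Finset.mem_coe]
    tauto
  partner := hp₀
  source_injective := ha
  sink_injective := hb
  source_ne_sink := hab
  source_mem_iff i := by simp [hA, hB, (hab i _).symm]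
  sink_mem_iff j := by simp [hA, hB, hab, mem_right_iff_notMem_left hbip]
  mem_iff x := by
    have hdisjoint : x ∈ Set.range a → x ∉ Set.range b := by
      rintro ⟨i, rfl⟩ ⟨j, hj⟩
      exact hab i j hj.symm
    simp only [Finset.mem_sdiff, Finset.mem_univ, true_and, Finset.mem_union, Finset.mem_inter,
      hA, hB, mem_right_iff_notMem_left hbip]
    tauto

end MatchingCounts

end Condensation

/-- (Theorem 4.1.) Determinant generalization of graphical
condensation for bipartite graphs. -/
theorem determinant_condensation {α : Type*} [Fintype α] [DecidableEq α]
    (G : SimpleGraph α) (U V : Finset α) (hbip : IsBipartition G U V) (n : ℕ)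
    (a b : Fin n → α)
    (hdist : (List.ofFn a ++ (List.ofFn b).reverse).Nodup)
    (hnc : NoncrossingList G (List.ofFn a ++ (List.ofFn b).reverse))
    (A B : Finset α) (hA : A = Finset.univ.image a) (hB : B = Finset.univ.image b)
    (huniq : ∃! m : Finset (Sym2 α), IsPMOn G (Finset.univ \ ((A ∩ U) ∪ (B ∩ V))) m) :
    (pmCount G (Finset.univ \ ((A ∩ V) ∪ (B ∩ U))) : ℤ) =
      Matrix.det (Matrix.of fun i j : Fin n =>
        (pmCount G (symmDiff (Finset.univ \ ((A ∩ U) ∪ (B ∩ V))) {a i, b j}) : ℤ)) := by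
  obtain ⟨ha, hb, hab⟩ := List.nodup_append.1 hdist
  rw [List.nodup_ofFn] at ha
  rw [List.nodup_reverse, List.nodup_ofFn] at hb
  have hab (i j : Fin n) : a i ≠ b j := hab _ (by simp) _ (by simp)
  have hcount : pmCount G (Finset.univ \ ((A ∩ U) ∪ (B ∩ V))) = 1 :=
    Nat.card_eq_one_iff_unique.2 ((unique_iff_subsingleton_and_nonempty _).1
      ((unique_subtype_iff_existsUnique _).2 huniq))
  obtain ⟨m, hm, -⟩ := huniq
  obtain ⟨p₀, hp₀, -⟩ := Condensation.exists_isPartnerPerm_of_isPMOn hm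
  have hterminals := Condensation.terminals_of_isBipartition hbip (a := a) (b := b)
    (by simp [hA]) (by simp [hB]) ha hb hab hp₀
  exact hterminals.pmCount_eq_det hcount (Condensation.noncrossing_of_noncrossingList hnc)
end

section
/- Let G be a finite simple bipartite graph with bipartition classes U and V, and let a_1,…,a_n, b_n,…,b_1 be distinct vertices with A = {a_1,…,a_n} ⊆ U and B = {b_1,…,b_n} ⊆ V, such that G is noncrossing with respect to the cyclic sequence (a_1,…,a_n, b_n,…,b_1). Let L = G−A−B, and for 1 ≤ i,j ≤ n let L_{ij} be the induced subgraph of G on V(L) ∪ {a_i, b_j}. If L has exactly one perfect matching, then M(G) = det[M(L_{ij})]_{1≤i,j≤n}. -/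
/-!
Let `mL` be the unique perfect matching of `L`. Label the `U`-vertices (`row`) and the `V`-vertices
(`col`) of `G` by `I ⊕ K` so that `inl i` labels the two ends of an edge of `mL` and `inr k` labels
`a k` and `b k`. Perfect matchings of `G` become permutations `σ` of `I ⊕ K` with `row j` adjacent
to `col (σ j)`.

Every nontrivial cycle of such a `σ` contains exactly one terminal `inr k`: at least one, since a
cycle inside `I` would produce a second perfect matching of `L`; at most one, since following `σ`
from one terminal to the next traces disjoint paths from `a k` to `b (π k)`, and noncrossing makes
the permutation `π` increasing, hence the identity. So `sign σ` is `-1` to the number of moved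
points of `I`, and if the off-diagonal entries in the rows of `I` of the biadjacency matrix are
negated, then the determinant counts perfect matchings. The same applies to `L` and to every
`L_{ij}`, whose matrices are the `I`-block (of determinant one) and its one-row-one-column
borderings; Sylvester's determinant identity compares them with the whole matrix.
-/

open Equiv Function

/-! ### Excursions of a permutation between visits to a set -/

/-- `Excursion σ S x y`: iterating `σ` from `x` reaches `y` before meeting `S` again. The starting
point `x` itself may lie in `S`. -/
def Excursion {J : Type*} (σ : Perm J) (S : Set J) : J → J → Prop :=
  Relation.ReflTransGen fun x y => σ x = y ∧ y ∉ S

/-- `FirstReturn σ S x y`: the point `y` is the first one of `S` among `σ x, σ (σ x), …`. -/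
def FirstReturn {J : Type*} (σ : Perm J) (S : Set J) (x y : J) : Prop :=
  y ∈ S ∧ ∃ z, Excursion σ S x z ∧ σ z = y

section Excursion

variable {J : Type*} {σ : Perm J} {S : Set J} {x x' y y' z : J}

theorem Excursion.eq_of_mem (h : Excursion σ S x y) (hy : y ∈ S) : x = y := by
  rcases Relation.ReflTransGen.cases_tail h with rfl | ⟨_, -, -, hy'⟩
  · rfl
  · exact absurd hy hy'

theorem Excursion.source_unique (hx : x ∈ S) (hx' : x' ∈ S) (h : Excursion σ S x z)
    (h' : Excursion σ S x' z) : x = x' := by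
  induction h with
  | refl => exact (h'.eq_of_mem hx).symm
  | tail _ hstep ih =>
    obtain ⟨rfl, hz⟩ := hstep
    rcases Relation.ReflTransGen.cases_tail h' with rfl | ⟨_, hw, hstep', -⟩
    · exact absurd hx' hz
    · exact ih (σ.injective hstep' ▸ hw)

theorem Excursion.eq_of_apply_mem (h : Excursion σ S x y) (hy : σ x ∈ S) : x = y := by
  rcases Relation.ReflTransGen.cases_head h with rfl | ⟨_, ⟨rfl, hx⟩, -⟩
  · rfl
  · exact absurd hy hx

theorem FirstReturn.unique (h : FirstReturn σ S x y) (h' : FirstReturn σ S x y') : y = y' := by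
  obtain ⟨hy, z, hz, rfl⟩ := h
  obtain ⟨hy', z', hz', rfl⟩ := h'
  have hdet : Relator.RightUnique fun x y => σ x = y ∧ y ∉ S :=
    fun _ _ _ h₁ h₂ => h₁.1.symm.trans h₂.1
  rcases Relation.ReflTransGen.total_of_right_unique hdet hz hz' with hzz' | hz'z
  · rw [Excursion.eq_of_apply_mem hzz' hy]
  · rw [Excursion.eq_of_apply_mem hz'z hy']

theorem FirstReturn.source_unique (hx : x ∈ S) (hx' : x' ∈ S) (h : FirstReturn σ S x y)
    (h' : FirstReturn σ S x' y) : x = x' := by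
  obtain ⟨-, z, hz, rfl⟩ := h
  obtain ⟨-, z', hz', hzz'⟩ := h'
  exact hz.source_unique hx hx' (σ.injective hzz' ▸ hz')

variable [Finite J]

theorem exists_firstReturn (σ : Perm J) (hx : x ∈ S) : ∃ y, FirstReturn σ S x y := by
  by_contra! hnone
  have hpow (t : ℕ) : Excursion σ S x ((σ ^ t) x) := by
    induction t with
    | zero => exact .refl
    | succ t ih =>
      rw [pow_succ', Perm.mul_apply]
      exact ih.tail ⟨rfl, fun hmem => hnone _ ⟨hmem, _, ih, rfl⟩⟩
  have hinv : σ.SameCycle x (σ.symm x) := Perm.sameCycle_symm_apply_right.2 (.refl σ x)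
  obtain ⟨t, ht⟩ := hinv.exists_nat_pow_eq
  exact hnone x ⟨hx, _, hpow t, by rw [ht, apply_symm_apply]⟩

theorem FirstReturn.excursion_of_sameCycle (h : FirstReturn σ S x x) (hxy : σ.SameCycle x y) :
    Excursion σ S x y := by
  obtain ⟨t, rfl⟩ := hxy.exists_nat_pow_eq
  clear hxy
  induction t with
  | zero => exact .refl
  | succ t ih =>
    rw [pow_succ', Perm.mul_apply]
    by_cases hmem : σ ((σ ^ t) x) ∈ S
    · rw [← h.unique ⟨hmem, _, ih, rfl⟩]
      exact .refl
    · exact ih.tail ⟨rfl, hmem⟩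

end Excursion

/-! ### The sign of a permutation with a transversal of its cycles -/

/-- `S` contains exactly one point of each nontrivial cycle of `σ`. -/
def IsCycleTransversal {J : Type*} (σ : Perm J) (S : Set J) : Prop :=
  ∀ x, σ x ≠ x → ∃! y, y ∈ S ∧ σ.SameCycle x y

section CycleTransversal

variable {J : Type*} [Fintype J] [DecidableEq J] {σ : Perm J} {S : Set J} [DecidablePred (· ∈ S)]

theorem IsCycleTransversal.card_support_inter (h : IsCycleTransversal σ S) :
    (σ.support.filter (· ∈ S)).card = σ.cycleFactorsFinset.card := by
  refine Finset.card_bij (fun x _ => σ.cycleOf x) ?_ ?_ ?_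
  · intro x hx
    exact Perm.cycleOf_mem_cycleFactorsFinset_iff.2 (Finset.mem_filter.1 hx).1
  · intro x hx y hy hxy
    obtain ⟨hxσ, hxS⟩ := Finset.mem_filter.1 hx
    obtain ⟨hyσ, hyS⟩ := Finset.mem_filter.1 hy
    exact (h x (Perm.mem_support.1 hxσ)).unique ⟨hxS, .refl σ x⟩
      ⟨hyS, (Perm.sameCycle_iff_cycleOf_eq_of_mem_support hxσ hyσ).2 hxy⟩
  · intro c hc
    obtain ⟨x, hx⟩ := (Perm.mem_cycleFactorsFinset_iff.1 hc).1.nonempty_support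
    have hxσ := Perm.mem_cycleFactorsFinset_support_le hc hx
    obtain ⟨y, ⟨hyS, hxy⟩, -⟩ := h x (Perm.mem_support.1 hxσ)
    refine ⟨y, Finset.mem_filter.2 ⟨hxy.mem_support_iff.1 hxσ, hyS⟩, ?_⟩
    rw [← hxy.cycleOf_eq, Perm.cycle_is_cycleOf hx hc]

theorem IsCycleTransversal.sign_eq (h : IsCycleTransversal σ S) :
    Perm.sign σ = (-1) ^ (σ.support.filter (· ∉ S)).card := by
  have hcycles : σ.cycleType.card = (σ.support.filter (· ∈ S)).card := by
    rw [h.card_support_inter, Perm.cycleType_def, Multiset.card_map, Finset.card_val]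
  rw [Perm.sign_of_cycleType, Perm.sum_cycleType, hcycles,
    ← Finset.card_filter_add_card_filter_not (s := σ.support) (· ∈ S),
    add_right_comm, pow_add, Even.neg_one_pow ⟨_, rfl⟩, one_mul]

end CycleTransversal

/-! ### Perfect matchings as permutations -/

/-- `row` and `col` label, without repetition, the vertices in the two classes of a bipartite
induced subgraph of `G`. -/
structure IsBipartiteLabelling {α J : Type*} (G : SimpleGraph α) (row col : J → α) : Prop where
  row_injective : Injective row
  col_injective : Injective col
  row_ne_col : ∀ j k, row j ≠ col k
  not_adj_row : ∀ j k, ¬ G.Adj (row j) (row k)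
  not_adj_col : ∀ j k, ¬ G.Adj (col j) (col k)

/-- `σ` encodes a perfect matching that joins `row j` to `col (σ j)`. -/
def IsMatchingPerm {α J : Type*} (G : SimpleGraph α) (row col : J → α) (σ : Perm J) : Prop :=
  ∀ j, G.Adj (row j) (col (σ j))

/-- The edge set encoded by the permutation `σ`. -/
def permEdges {α J : Type*} [DecidableEq α] [Fintype J] (row col : J → α) (σ : Perm J) :
    Finset (Sym2 α) :=
  Finset.univ.image fun j => s(row j, col (σ j))

theorem mem_permEdges {α J : Type*} [DecidableEq α] [Fintype J] {row col : J → α} {σ : Perm J}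
    {e : Sym2 α} : e ∈ permEdges row col σ ↔ ∃ j, s(row j, col (σ j)) = e := by
  simp [permEdges]

theorem IsPMOn.eq_of_mem {α : Type*} {G : SimpleGraph α} {s : Finset α} {m : Finset (Sym2 α)}
    (hm : IsPMOn G s m) {e f : Sym2 α} (he : e ∈ m) (hf : f ∈ m) {v : α} (hve : v ∈ e)
    (hvf : v ∈ f) : e = f :=
  (hm.2 v ((hm.1 e he).2 v hve)).unique ⟨he, hve⟩ ⟨hf, hvf⟩

namespace IsBipartiteLabelling

variable {α J J' : Type*} {G : SimpleGraph α} {row col : J → α}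

theorem of_isBipartiteWith {U V : Set α} (hG : G.IsBipartiteWith U V) (hrow : Injective row)
    (hcol : Injective col) (hU : ∀ j, row j ∈ U) (hV : ∀ j, col j ∈ V) :
    IsBipartiteLabelling G row col where
  row_injective := hrow
  col_injective := hcol
  row_ne_col j k := hG.disjoint.ne_of_mem (hU j) (hV k)
  not_adj_row j k hadj := hG.disjoint.ne_of_mem (hU k) (hG.mem_of_mem_adj (hU j) hadj) rfl
  not_adj_col j k hadj := hG.disjoint.ne_of_mem (hG.mem_of_mem_adj' (hV k) hadj) (hV j) rfl

theorem comp (h : IsBipartiteLabelling G row col) {f g : J' → J} (hf : Injective f)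
    (hg : Injective g) : IsBipartiteLabelling G (row ∘ f) (col ∘ g) where
  row_injective := h.row_injective.comp hf
  col_injective := h.col_injective.comp hg
  row_ne_col _ _ := h.row_ne_col _ _
  not_adj_row _ _ := h.not_adj_row _ _
  not_adj_col _ _ := h.not_adj_col _ _

theorem edge_eq_iff (h : IsBipartiteLabelling G row col) {j j' k k' : J} :
    s(row j, col k) = s(row j', col k') ↔ j = j' ∧ k = k' := by
  simp [h.row_ne_col, h.row_injective.eq_iff, h.col_injective.eq_iff]

variable {s : Finset α} {m : Finset (Sym2 α)}

theorem exists_edge_eq (h : IsBipartiteLabelling G row col)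
    (hs : (s : Set α) = Set.range row ∪ Set.range col) (hm : IsPMOn G s m) {e : Sym2 α}
    (he : e ∈ m) : ∃ j k, s(row j, col k) = e := by
  obtain ⟨hadj, hmem⟩ := hm.1 e he
  have hlabel (v : α) (hv : v ∈ e) : v ∈ Set.range row ∪ Set.range col := hs ▸ hmem v hv
  induction e using Sym2.ind with
  | _ x y =>
    rw [SimpleGraph.mem_edgeSet] at hadj
    rcases hlabel x (Sym2.mem_mk_left x y), hlabel y (Sym2.mem_mk_right x y) with
      ⟨⟨j, rfl⟩ | ⟨j, rfl⟩, ⟨k, rfl⟩ | ⟨k, rfl⟩⟩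
    · exact absurd hadj (h.not_adj_row j k)
    · exact ⟨j, k, rfl⟩
    · exact ⟨k, j, Sym2.eq_swap⟩
    · exact absurd hadj (h.not_adj_col j k)

section PermEdges

variable [Fintype J] [DecidableEq α]

theorem isPMOn_permEdges (h : IsBipartiteLabelling G row col)
    (hs : (s : Set α) = Set.range row ∪ Set.range col) {σ : Perm J}
    (hσ : IsMatchingPerm G row col σ) : IsPMOn G s (permEdges row col σ) := by
  have hmem (v : α) : v ∈ s ↔ v ∈ Set.range row ∪ Set.range col := by rw [← hs, Finset.mem_coe]
  refine ⟨fun e he => ?_, fun v hv => ?_⟩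
  · obtain ⟨j, rfl⟩ := mem_permEdges.1 he
    refine ⟨hσ j, fun v hv => (hmem v).2 ?_⟩
    rcases Sym2.mem_iff.1 hv with rfl | rfl
    · exact .inl ⟨j, rfl⟩
    · exact .inr ⟨σ j, rfl⟩
  · rcases (hmem v).1 hv with ⟨j, rfl⟩ | ⟨k, rfl⟩
    · refine ⟨_, ⟨mem_permEdges.2 ⟨j, rfl⟩, Sym2.mem_mk_left _ _⟩, ?_⟩
      rintro e ⟨he, hve⟩
      obtain ⟨j', rfl⟩ := mem_permEdges.1 he
      have hjj' : j = j' := by simpa [h.row_ne_col, h.row_injective.eq_iff] using hve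
      rw [hjj']
    · obtain ⟨j, rfl⟩ := σ.surjective k
      refine ⟨_, ⟨mem_permEdges.2 ⟨j, rfl⟩, Sym2.mem_mk_right _ _⟩, ?_⟩
      rintro e ⟨he, hve⟩
      obtain ⟨j', rfl⟩ := mem_permEdges.1 he
      have hjj' : j = j' := by
        simpa [(h.row_ne_col _ _).symm, h.col_injective.eq_iff] using hve
      rw [hjj']

theorem permEdges_injective (h : IsBipartiteLabelling G row col) :
    Injective (permEdges row col) := by
  intro σ τ hστ
  ext j
  obtain ⟨j', hj'⟩ := mem_permEdges.1 (hστ ▸ mem_permEdges.2 ⟨j, rfl⟩)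
  obtain ⟨rfl, hσj⟩ := h.edge_eq_iff.1 hj'
  exact hσj.symm

theorem exists_permEdges_eq (h : IsBipartiteLabelling G row col)
    (hs : (s : Set α) = Set.range row ∪ Set.range col) (hm : IsPMOn G s m) :
    ∃ σ, IsMatchingPerm G row col σ ∧ permEdges row col σ = m := by
  have hmate (j : J) : ∃ k, s(row j, col k) ∈ m := by
    have hj : row j ∈ s := by rw [← Finset.mem_coe, hs]; exact .inl ⟨j, rfl⟩
    obtain ⟨e, ⟨he, hje⟩, -⟩ := hm.2 _ hj
    obtain ⟨j', k, rfl⟩ := h.exists_edge_eq hs hm he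
    have hjj' : j = j' := by simpa [h.row_ne_col, h.row_injective.eq_iff] using hje
    exact ⟨k, hjj' ▸ he⟩
  choose f hf using hmate
  have hf_injective : Injective f := fun j j' hjj' =>
    (h.edge_eq_iff.1 (hm.eq_of_mem (hf j) (hf j') (Sym2.mem_mk_right _ _)
      (hjj' ▸ Sym2.mem_mk_right _ _))).1
  refine ⟨.ofBijective f (Finite.injective_iff_bijective.1 hf_injective),
    fun j => (hm.1 _ (hf j)).1, ?_⟩
  ext e
  refine mem_permEdges.trans ⟨?_, fun he => ?_⟩
  · rintro ⟨j, rfl⟩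
    exact hf j
  · obtain ⟨j, k, rfl⟩ := h.exists_edge_eq hs hm he
    exact ⟨j, hm.eq_of_mem (hf j) he (Sym2.mem_mk_left _ _) (Sym2.mem_mk_left _ _)⟩

end PermEdges

variable [Finite J]

theorem pmCount_eq_card (h : IsBipartiteLabelling G row col)
    (hs : (s : Set α) = Set.range row ∪ Set.range col) :
    pmCount G s = Nat.card {σ : Perm J // IsMatchingPerm G row col σ} := by
  classical
  let _ := Fintype.ofFinite J
  refine (Nat.card_eq_of_bijective
    (fun σ => ⟨permEdges row col σ.1, h.isPMOn_permEdges hs σ.2⟩) ⟨?_, ?_⟩).symm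
  · exact fun σ τ hστ => Subtype.ext (h.permEdges_injective (congrArg Subtype.val hστ))
  · rintro ⟨m, hm⟩
    obtain ⟨σ, hσ, hσm⟩ := h.exists_permEdges_eq hs hm
    exact ⟨⟨σ, hσ⟩, Subtype.ext hσm⟩

theorem isMatchingPerm_iff_eq_one (h : IsBipartiteLabelling G row col)
    (hs : (s : Set α) = Set.range row ∪ Set.range col) (huniq : ∃! m, IsPMOn G s m)
    (hadj : ∀ j, G.Adj (row j) (col j)) (σ : Perm J) :
    IsMatchingPerm G row col σ ↔ σ = 1 := by
  classical
  let _ := Fintype.ofFinite J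
  refine ⟨fun hσ => h.permEdges_injective ?_, ?_⟩
  · exact huniq.unique (h.isPMOn_permEdges hs hσ) (h.isPMOn_permEdges hs hadj)
  · rintro rfl
    exact hadj

end IsBipartiteLabelling

/-! ### A signed biadjacency matrix whose determinant counts perfect matchings -/

open Classical in
/-- The biadjacency matrix of the labelled graph with the off-diagonal entries in the rows outside
`S` negated, so that a permutation with cycle transversal `S` contributes `1` to the determinant. -/
noncomputable def signedBiadj {α J : Type*} (G : SimpleGraph α) (row col : J → α) (S : Set J) :
    Matrix J J ℤ :=
  Matrix.of fun r c => if G.Adj (row r) (col c) then (if r ≠ c ∧ r ∉ S then -1 else 1) else 0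

section SignedBiadj

variable {α J : Type*} [Fintype J] {G : SimpleGraph α} {row col : J → α} {S : Set J}

theorem prod_signedBiadj_eq_zero {σ : Perm J} (hσ : ¬ IsMatchingPerm G row col σ) :
    ∏ j, signedBiadj G row col S j (σ j) = 0 := by
  obtain ⟨j, hj⟩ := not_forall.1 hσ
  exact Finset.prod_eq_zero (Finset.mem_univ j) (if_neg hj)

variable [DecidableEq J]

theorem sign_mul_prod_signedBiadj {σ : Perm J} (hσ : IsMatchingPerm G row col σ)
    (hS : IsCycleTransversal σ S) :
    (Perm.sign σ : ℤ) * ∏ j, signedBiadj G row col S j (σ j) = 1 := by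
  classical
  have hprod : ∏ j, signedBiadj G row col S j (σ j) =
      (-1) ^ (σ.support.filter (· ∉ S)).card := by
    have hentry (j : J) : signedBiadj G row col S j (σ j) =
        if j ∈ σ.support.filter (· ∉ S) then -1 else 1 := by
      simp [signedBiadj, hσ j, eq_comm]
    simp only [hentry, Finset.prod_ite_mem, Finset.univ_inter, Finset.prod_const]
  rw [hprod, hS.sign_eq]
  push_cast
  rw [← pow_add, Even.neg_one_pow ⟨_, rfl⟩]

theorem det_signedBiadj_eq_card
    (hS : ∀ σ, IsMatchingPerm G row col σ → IsCycleTransversal σ S) :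
    (signedBiadj G row col S).det = Nat.card {σ : Perm J // IsMatchingPerm G row col σ} := by
  classical
  rw [← Matrix.det_transpose, Matrix.det_apply', Nat.card_eq_fintype_card, Fintype.card_subtype,
    Finset.card_filter, Nat.cast_sum]
  refine Finset.sum_congr rfl fun σ _ => ?_
  simp only [Matrix.transpose_apply]
  split_ifs with hσ
  · exact (sign_mul_prod_signedBiadj hσ (hS σ hσ)).trans Nat.cast_one.symm
  · rw [prod_signedBiadj_eq_zero hσ, mul_zero, Nat.cast_zero]

end SignedBiadj

theorem det_signedBiadj_empty_eq_one {α I : Type*} [Fintype I] [DecidableEq I]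
    {G : SimpleGraph α} {row col : I → α}
    (huniq : ∀ τ : Perm I, IsMatchingPerm G row col τ ↔ τ = 1) :
    (signedBiadj G row col ∅).det = 1 := by
  rw [det_signedBiadj_eq_card fun σ hσ x hx => absurd (by rw [(huniq σ).1 hσ]; rfl) hx]
  simp [huniq]

/-! ### Noncrossing terminals -/

/-- No two disjoint paths from the `a i` to the `b k` invert the order of the indices. For the
cyclic sequence `a₁, …, aₙ, bₙ, …, b₁` this is what noncrossing says about paths that join an
`a` to a `b`. -/
def NoncrossingTerminals {α K : Type*} [LT K] (G : SimpleGraph α) (a b : K → α) : Prop :=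
  ∀ ⦃i j⦄, i < j → ∀ ⦃k l⦄, k < l →
    ¬ DisjointPaths G (Set.range a ∪ Set.range b) (a i) (b l) (a j) (b k)

theorem noncrossingTerminals_of_subsingleton {α K : Type*} [Preorder K] [Subsingleton K]
    (G : SimpleGraph α) (a b : K → α) : NoncrossingTerminals G a b :=
  fun i j hij => absurd (Subsingleton.elim i j) hij.ne

theorem NoncrossingList.noncrossingTerminals {α : Type*} {G : SimpleGraph α} {n : ℕ}
    {a b : Fin n → α} (h : NoncrossingList G (List.ofFn a ++ (List.ofFn b).reverse)) :
    NoncrossingTerminals G a b := by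
  intro i j hij k l hkl
  set L := List.ofFn a ++ (List.ofFn b).reverse with hL
  have hlen : L.length = n + n := by simp [hL]
  have hset : {x | x ∈ L} = Set.range a ∪ Set.range b := by
    ext x
    simp [hL, List.mem_ofFn]
  have get_a (i : Fin n) (hi : i.1 < L.length) : L.get ⟨i, hi⟩ = a i := by
    simp [hL]
  have get_b (k : Fin n) (hk : n + (n - 1 - k) < L.length) :
      L.get ⟨n + (n - 1 - k), hk⟩ = b k := by
    simp [hL, Nat.sub_sub_self (Nat.le_sub_one_of_lt k.2)]
  have hcross := h ⟨i, by omega⟩ ⟨j, by omega⟩ ⟨n + (n - 1 - l), by omega⟩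
    ⟨n + (n - 1 - k), by omega⟩ hij (Fin.mk_lt_mk.2 (by omega)) (Fin.mk_lt_mk.2 (by omega))
  rwa [hset, get_a, get_a, get_b, get_b] at hcross

section Terminals

variable {α I K : Type*} {G : SimpleGraph α} {row col : I ⊕ K → α} {σ : Perm (I ⊕ K)}

/-- The vertices met when edges `row y — col (σ y)` of the matching `σ` and edges
`col (inl i) — row (inl i)` are followed alternately from `row x` to the next terminal. -/
def excursionVertices (row col : I ⊕ K → α) (σ : Perm (I ⊕ K)) (x : I ⊕ K) : Set α :=
  {v | ∃ y, Excursion σ (Set.range Sum.inr) x y ∧ (v = row y ∨ v = col (σ y))}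

theorem IsMatchingPerm.exists_path_of_excursion (hσ : IsMatchingPerm G row col σ)
    (hadj : ∀ i, G.Adj (row (.inl i)) (col (.inl i))) {x z : I ⊕ K}
    (h : Excursion σ (Set.range Sum.inr) x z) :
    ∃ w : G.Walk (row x) (col (σ z)), w.IsPath ∧
      ∀ v ∈ w.support, v ∈ excursionVertices row col σ x := by
  classical
  suffices hwalk : ∃ w : G.Walk (row x) (col (σ z)),
      ∀ v ∈ w.support, v ∈ excursionVertices row col σ x by
    obtain ⟨w, hw⟩ := hwalk
    exact ⟨w.bypass, w.bypass_isPath,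
      fun v hv => hw v (w.support_bypass_subset_support hv)⟩
  induction h with
  | refl =>
    refine ⟨(hσ x).toWalk, fun v hv => ⟨x, .refl, ?_⟩⟩
    simpa using hv
  | @tail y z hxy hstep ih =>
    obtain ⟨w, hw⟩ := ih
    obtain ⟨rfl, hz⟩ := hstep
    obtain ⟨i, hi⟩ : ∃ i, σ y = .inl i := by
      rcases hσy : σ y with i | k
      · exact ⟨i, rfl⟩
      · exact absurd ⟨k, hσy.symm⟩ hz
    have hpair : G.Adj (col (σ y)) (row (σ y)) := hi ▸ (hadj i).symm
    refine ⟨(w.concat hpair).concat (hσ (σ y)), fun v hv => ?_⟩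
    simp only [SimpleGraph.Walk.support_concat, List.mem_append, List.mem_singleton] at hv
    rcases hv with (hv | rfl) | rfl
    · exact hw v hv
    · exact ⟨σ y, hxy.tail ⟨rfl, hz⟩, .inl rfl⟩
    · exact ⟨σ y, hxy.tail ⟨rfl, hz⟩, .inr rfl⟩

theorem IsMatchingPerm.exists_path_of_firstReturn (hσ : IsMatchingPerm G row col σ)
    (hadj : ∀ i, G.Adj (row (.inl i)) (col (.inl i))) {x y : I ⊕ K}
    (h : FirstReturn σ (Set.range Sum.inr) x y) :
    ∃ w : G.Walk (row x) (col y), w.IsPath ∧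
      ∀ v ∈ w.support, v ∈ excursionVertices row col σ x := by
  obtain ⟨-, z, hz, rfl⟩ := h
  exact hσ.exists_path_of_excursion hadj hz

theorem notMem_terminals_of_mem_excursionVertices (hlab : IsBipartiteLabelling G row col)
    {x y : I ⊕ K} (h : FirstReturn σ (Set.range Sum.inr) x y) {v : α}
    (hv : v ∈ excursionVertices row col σ x) (hvx : v ≠ row x) (hvy : v ≠ col y) :
    v ∉ Set.range (row ∘ Sum.inr) ∪ Set.range (col ∘ Sum.inr) := by
  obtain ⟨z, hz, rfl | rfl⟩ := hv
  · rintro (⟨k, hk⟩ | ⟨k, hk⟩)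
    · exact hvx (congrArg row (hz.eq_of_mem ⟨k, hlab.row_injective hk⟩).symm)
    · exact hlab.row_ne_col _ _ hk.symm
  · rintro (⟨k, hk⟩ | ⟨k, hk⟩)
    · exact hlab.row_ne_col _ _ hk
    · exact hvy (congrArg col (h.unique ⟨⟨k, hlab.col_injective hk⟩, z, hz, rfl⟩).symm)

theorem disjoint_excursionVertices (hlab : IsBipartiteLabelling G row col) {i j : K}
    (hij : i ≠ j) :
    Disjoint (excursionVertices row col σ (.inr i)) (excursionVertices row col σ (.inr j)) := by
  rw [Set.disjoint_left]
  rintro v ⟨y, hy, hvy⟩ ⟨y', hy', hvy'⟩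
  have hyy' : y = y' := by
    rcases hvy with rfl | rfl <;> rcases hvy' with h | h
    · exact hlab.row_injective h
    · exact absurd h (hlab.row_ne_col _ _)
    · exact absurd h.symm (hlab.row_ne_col _ _)
    · exact σ.injective (hlab.col_injective h)
  exact hij (Sum.inr_injective
    (hy.source_unique (Set.mem_range_self i) (Set.mem_range_self j) (hyy' ▸ hy')))

theorem IsMatchingPerm.disjointPaths (hlab : IsBipartiteLabelling G row col)
    (hσ : IsMatchingPerm G row col σ) (hadj : ∀ i, G.Adj (row (.inl i)) (col (.inl i)))
    {i j k l : K} (hij : i ≠ j) (hil : FirstReturn σ (Set.range Sum.inr) (.inr i) (.inr l))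
    (hjk : FirstReturn σ (Set.range Sum.inr) (.inr j) (.inr k)) :
    DisjointPaths G (Set.range (row ∘ Sum.inr) ∪ Set.range (col ∘ Sum.inr))
      (row (.inr i)) (col (.inr l)) (row (.inr j)) (col (.inr k)) := by
  obtain ⟨p, hp, hp_support⟩ := hσ.exists_path_of_firstReturn hadj hil
  obtain ⟨q, hq, hq_support⟩ := hσ.exists_path_of_firstReturn hadj hjk
  refine ⟨p, q, hp, hq, fun v hvp hvq => ?_, fun v hv => ?_, fun v hv => ?_⟩
  · exact Set.disjoint_left.1 (disjoint_excursionVertices hlab hij) (hp_support v hvp)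
      (hq_support v hvq)
  · exact notMem_terminals_of_mem_excursionVertices hlab hil (hp_support v hv)
  · exact notMem_terminals_of_mem_excursionVertices hlab hjk (hq_support v hv)

variable [Finite I] [Finite K]

theorem IsMatchingPerm.firstReturn_self [LinearOrder K] (hlab : IsBipartiteLabelling G row col)
    (hσ : IsMatchingPerm G row col σ) (hadj : ∀ i, G.Adj (row (.inl i)) (col (.inl i)))
    (hnc : NoncrossingTerminals G (row ∘ Sum.inr) (col ∘ Sum.inr)) (k : K) :
    FirstReturn σ (Set.range Sum.inr) (.inr k) (.inr k) := by
  have hreturn (k : K) : ∃ l, FirstReturn σ (Set.range Sum.inr) (.inr k) (.inr l) := by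
    obtain ⟨_, h⟩ := exists_firstReturn σ (Set.mem_range_self (f := Sum.inr) k)
    obtain ⟨l, rfl⟩ := h.1
    exact ⟨l, h⟩
  choose π hπ using hreturn
  have hπ_injective : Injective π := fun i j hij =>
    Sum.inr_injective
      ((hπ i).source_unique (Set.mem_range_self i) (Set.mem_range_self j) (hij ▸ hπ j))
  have hπ_strictMono : StrictMono π := by
    intro i j hij
    by_contra! hle
    have hlt : π j < π i := hle.lt_of_ne (hπ_injective.ne hij.ne')
    exact hnc hij hlt (hσ.disjointPaths hlab hadj hij.ne (hπ i) (hπ j))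
  have hπk : π k = k := le_antisymm hπ_strictMono.apply_le hπ_strictMono.le_apply
  simpa only [hπk] using hπ k

theorem IsMatchingPerm.exists_sameCycle_inr (hσ : IsMatchingPerm G row col σ)
    (huniq : ∀ τ : Perm I, IsMatchingPerm G (row ∘ Sum.inl) (col ∘ Sum.inl) τ ↔ τ = 1)
    {x : I ⊕ K} (hx : σ x ≠ x) : ∃ k, σ.SameCycle x (.inr k) := by
  classical
  by_contra! hnone
  have hfix (k : K) : σ.cycleOf x (.inr k) = .inr k := Perm.cycleOf_apply_of_not_sameCycle (hnone k)
  have hmaps : Set.MapsTo (σ.cycleOf x) (Set.range Sum.inl) (Set.range Sum.inl) := by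
    rintro _ ⟨i, rfl⟩
    rcases h : σ.cycleOf x (.inl i) with i' | k
    · exact ⟨i', rfl⟩
    · exact absurd ((σ.cycleOf x).injective (h.trans (hfix k).symm)) Sum.inl_ne_inr
  obtain ⟨⟨τ, _⟩, hτ⟩ := Perm.mem_sumCongrHom_range_of_perm_mapsTo_inl hmaps
  have hcycle_inl (i : I) : σ.cycleOf x (.inl i) = .inl (τ i) := by rw [← hτ]; rfl
  have hτ_one : τ = 1 := by
    refine (huniq τ).1 fun i => ?_
    change G.Adj (row (.inl i)) (col (.inl (τ i)))
    rw [← hcycle_inl, Perm.cycleOf_apply]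
    split_ifs
    · exact hσ _
    · exact (huniq 1).2 rfl i
  refine hx ?_
  rw [← Perm.cycleOf_apply_self]
  rcases x with i | k
  · rw [hcycle_inl, hτ_one]; rfl
  · exact hfix k

theorem IsMatchingPerm.isCycleTransversal [LinearOrder K] (hlab : IsBipartiteLabelling G row col)
    (huniq : ∀ τ : Perm I, IsMatchingPerm G (row ∘ Sum.inl) (col ∘ Sum.inl) τ ↔ τ = 1)
    (hnc : NoncrossingTerminals G (row ∘ Sum.inr) (col ∘ Sum.inr))
    (hσ : IsMatchingPerm G row col σ) : IsCycleTransversal σ (Set.range Sum.inr) := by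
  intro x hx
  obtain ⟨k, hk⟩ := hσ.exists_sameCycle_inr huniq hx
  refine ⟨.inr k, ⟨⟨k, rfl⟩, hk⟩, fun y ⟨hy, hxy⟩ => ?_⟩
  have hself := hσ.firstReturn_self hlab ((huniq 1).2 rfl) hnc k
  exact ((hself.excursion_of_sameCycle (hk.symm.trans hxy)).eq_of_mem hy).symm

end Terminals

/-! ### Condensation -/

/-- The index map selecting the `I`-block together with the single index `k`. -/
def borderIndex {I K : Type*} (k : K) : I ⊕ Unit → I ⊕ K :=
  Sum.map id fun _ => k

theorem borderIndex_injective {I K : Type*} (k : K) :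
    Injective (borderIndex k : I ⊕ Unit → I ⊕ K) :=
  injective_id.sumMap (injective_of_subsingleton _)

section Sylvester

variable {I K R : Type*} [Fintype I] [DecidableEq I] [CommRing R]

theorem det_submatrix_borderIndex (M : Matrix (I ⊕ K) (I ⊕ K) R) [Invertible M.toBlocks₁₁]
    (i j : K) :
    (M.submatrix (borderIndex i) (borderIndex j)).det = M.toBlocks₁₁.det *
      (M.toBlocks₂₂ - M.toBlocks₂₁ * ⅟M.toBlocks₁₁ * M.toBlocks₁₂) i j := by
  have hblocks : M.submatrix (borderIndex i) (borderIndex j) =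
      Matrix.fromBlocks M.toBlocks₁₁ (M.toBlocks₁₂.submatrix id fun _ => j)
        (M.toBlocks₂₁.submatrix (fun _ => i) id)
        (M.toBlocks₂₂.submatrix (fun _ => i) fun _ => j) := by
    ext (r | r) (c | c) <;> rfl
  rw [hblocks, Matrix.det_fromBlocks₁₁, Matrix.det_unique (n := Unit)]
  rfl

/-- Sylvester's determinant identity. -/
theorem det_mul_det_submatrix_borderIndex [Fintype K] [DecidableEq K]
    (M : Matrix (I ⊕ K) (I ⊕ K) R) (hM : IsUnit M.toBlocks₁₁.det) :
    M.toBlocks₁₁.det *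
        (Matrix.of fun i j => (M.submatrix (borderIndex i) (borderIndex j)).det).det =
      M.toBlocks₁₁.det ^ Fintype.card K * M.det := by
  let _ := Matrix.invertibleOfIsUnitDet _ hM
  set Sch := M.toBlocks₂₂ - M.toBlocks₂₁ * ⅟M.toBlocks₁₁ * M.toBlocks₁₂ with hSch
  have hminors : (Matrix.of fun i j => (M.submatrix (borderIndex i) (borderIndex j)).det) =
      M.toBlocks₁₁.det • Sch := by
    ext i j
    exact det_submatrix_borderIndex M i j
  have hdet : M.det = M.toBlocks₁₁.det * Sch.det := by
    rw [hSch, ← Matrix.det_fromBlocks₁₁, Matrix.fromBlocks_toBlocks]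
  rw [hminors, Matrix.det_smul, hdet]
  ring

end Sylvester

section Blocks

variable {α I K : Type*} (G : SimpleGraph α) (row col : I ⊕ K → α)

theorem signedBiadj_toBlocks₁₁ :
    (signedBiadj G row col (Set.range Sum.inr)).toBlocks₁₁ =
      signedBiadj G (row ∘ Sum.inl) (col ∘ Sum.inl) ∅ := by
  ext r c
  simp only [signedBiadj, Matrix.toBlocks₁₁, Matrix.of_apply, comp_apply]
  grind

theorem signedBiadj_submatrix_borderIndex (i j : K) :
    (signedBiadj G row col (Set.range Sum.inr)).submatrix (borderIndex i) (borderIndex j) =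
      signedBiadj G (row ∘ borderIndex i) (col ∘ borderIndex j) (Set.range Sum.inr) := by
  ext r c
  simp only [signedBiadj, Matrix.submatrix_apply, Matrix.of_apply, comp_apply]
  rcases r with r | r <;> rcases c with c | c <;>
    simp only [borderIndex, Sum.map_inl, Sum.map_inr, id_eq] <;> grind

end Blocks

section Condensation

variable {α I K : Type*} [Fintype K] [LinearOrder K] {G : SimpleGraph α} {row col : I ⊕ K → α}

theorem pmCount_eq_det_signedBiadj [Fintype I] [DecidableEq I]
    (hlab : IsBipartiteLabelling G row col)
    (huniq : ∀ τ : Perm I, IsMatchingPerm G (row ∘ Sum.inl) (col ∘ Sum.inl) τ ↔ τ = 1)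
    (hnc : NoncrossingTerminals G (row ∘ Sum.inr) (col ∘ Sum.inr)) {s : Finset α}
    (hs : (s : Set α) = Set.range row ∪ Set.range col) :
    (pmCount G s : ℤ) = (signedBiadj G row col (Set.range Sum.inr)).det := by
  rw [hlab.pmCount_eq_card hs,
    det_signedBiadj_eq_card fun σ hσ => hσ.isCycleTransversal hlab huniq hnc]

theorem pmCount_eq_det_pmCount [Finite I] [DecidableEq α]
    (hlab : IsBipartiteLabelling G row col)
    (hadj : ∀ i, G.Adj (row (.inl i)) (col (.inl i)))
    (hnc : NoncrossingTerminals G (row ∘ Sum.inr) (col ∘ Sum.inr)) {s L : Finset α}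
    (hs : (s : Set α) = Set.range row ∪ Set.range col)
    (hL : (L : Set α) = Set.range (row ∘ Sum.inl) ∪ Set.range (col ∘ Sum.inl))
    (huniq : ∃! m, IsPMOn G L m) :
    (pmCount G s : ℤ) = Matrix.det (Matrix.of fun i j : K =>
      (pmCount G (L ∪ {row (.inr i), col (.inr j)}) : ℤ)) := by
  classical
  let _ := Fintype.ofFinite I
  have hone := (hlab.comp Sum.inl_injective Sum.inl_injective).isMatchingPerm_iff_eq_one hL huniq
    hadj
  have hminor (i j : K) : (pmCount G (L ∪ {row (.inr i), col (.inr j)}) : ℤ) =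
      ((signedBiadj G row col (Set.range Sum.inr)).submatrix
        (borderIndex i) (borderIndex j)).det := by
    rw [signedBiadj_submatrix_borderIndex]
    refine pmCount_eq_det_signedBiadj
      (hlab.comp (borderIndex_injective i) (borderIndex_injective j)) hone
      (noncrossingTerminals_of_subsingleton _ _ _) ?_
    ext v
    simp only [Finset.coe_union, hL, Finset.coe_insert, Finset.coe_singleton, Set.mem_insert_iff,
      Set.mem_singleton_iff, Set.mem_union, Set.mem_range, comp_apply, borderIndex, Sum.exists,
      Sum.map_inl, id_eq, Sum.map_inr, exists_const, eq_comm (a := v)]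
    tauto
  have hblock : (signedBiadj G row col (Set.range Sum.inr)).toBlocks₁₁.det = 1 := by
    rw [signedBiadj_toBlocks₁₁, det_signedBiadj_empty_eq_one hone]
  have hsylvester := det_mul_det_submatrix_borderIndex
    (signedBiadj G row col (Set.range Sum.inr)) (hblock ▸ isUnit_one)
  simp only [hminor, pmCount_eq_det_signedBiadj hlab hone hnc hs]
  simpa [hblock] using hsylvester.symm

end Condensation

theorem IsPMOn.exists_endpoints {α : Type*} {G : SimpleGraph α} {U V : Set α} {s : Finset α}
    {m : Finset (Sym2 α)} (hm : IsPMOn G s m) (hG : G.IsBipartiteWith U V) :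
    ∃ p q : m → α, Injective p ∧ Injective q ∧ (∀ e, p e ∈ U) ∧ (∀ e, q e ∈ V) ∧
      (∀ e, G.Adj (p e) (q e)) ∧ (s : Set α) = Set.range p ∪ Set.range q := by
  have hends (e : m) : ∃ u ∈ U, ∃ v ∈ V, s(u, v) = e := by
    obtain ⟨e, he⟩ := e
    induction e using Sym2.ind with
    | _ x y =>
      rcases hG.mem_of_adj (hm.1 _ he).1 with ⟨hx, hy⟩ | ⟨hx, hy⟩
      · exact ⟨x, hx, y, hy, rfl⟩
      · exact ⟨y, hy, x, hx, Sym2.eq_swap⟩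
  choose p hp q hq hpq using hends
  have hp_mem (e : m) : p e ∈ e.1 := hpq e ▸ Sym2.mem_mk_left _ _
  have hq_mem (e : m) : q e ∈ e.1 := hpq e ▸ Sym2.mem_mk_right _ _
  refine ⟨p, q, fun e f hef => ?_, fun e f hef => ?_, hp, hq, fun e => ?_, ?_⟩
  · exact Subtype.ext (hm.eq_of_mem e.2 f.2 (hp_mem e) (hef ▸ hp_mem f))
  · exact Subtype.ext (hm.eq_of_mem e.2 f.2 (hq_mem e) (hef ▸ hq_mem f))
  · rw [← SimpleGraph.mem_edgeSet, hpq]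
    exact (hm.1 _ e.2).1
  · ext v
    constructor
    · intro hv
      obtain ⟨e, ⟨he, hve⟩, -⟩ := hm.2 v hv
      obtain hve : v ∈ s(p ⟨e, he⟩, q ⟨e, he⟩) := hpq ⟨e, he⟩ ▸ hve
      exact (Sym2.mem_iff.1 hve).imp (fun h => ⟨_, h.symm⟩) fun h => ⟨_, h.symm⟩
    · rintro (⟨e, rfl⟩ | ⟨e, rfl⟩)
      · exact (hm.1 _ e.2).2 _ (hp_mem e)
      · exact (hm.1 _ e.2).2 _ (hq_mem e)

theorem IsPMOn.exists_isBipartiteLabelling {α K : Type*} {G : SimpleGraph α} {U V : Set α}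
    {s : Finset α} {m : Finset (Sym2 α)} (hm : IsPMOn G s m) (hG : G.IsBipartiteWith U V)
    {a b : K → α} (ha : Injective a) (hb : Injective b) (haU : ∀ k, a k ∈ U) (hbV : ∀ k, b k ∈ V)
    (has : ∀ k, a k ∉ s) (hbs : ∀ k, b k ∉ s) :
    ∃ p q : m → α, IsBipartiteLabelling G (Sum.elim p a) (Sum.elim q b) ∧
      (∀ e, G.Adj (p e) (q e)) ∧ (s : Set α) = Set.range p ∪ Set.range q := by
  obtain ⟨p, q, hp, hq, hpU, hqV, hadj, hs⟩ := hm.exists_endpoints hG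
  have hps (e : m) : p e ∈ s := by rw [← Finset.mem_coe, hs]; exact .inl ⟨e, rfl⟩
  have hqs (e : m) : q e ∈ s := by rw [← Finset.mem_coe, hs]; exact .inr ⟨e, rfl⟩
  exact ⟨p, q, .of_isBipartiteWith hG
    (hp.sumElim ha fun e k => ne_of_mem_of_not_mem (hps e) (has k))
    (hq.sumElim hb fun e k => ne_of_mem_of_not_mem (hqs e) (hbs k))
    (Sum.rec hpU haU) (Sum.rec hqV hbV), hadj, hs⟩

/-- (Corollary 4.2.) Determinant condensation with `A ⊆ U`, `B ⊆ V`. -/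
theorem determinant_condensation_M_G {α : Type*} [Fintype α] [DecidableEq α]
    (G : SimpleGraph α) (U V : Finset α) (hbip : IsBipartition G U V) (n : ℕ)
    (a b : Fin n → α)
    (hdist : (List.ofFn a ++ (List.ofFn b).reverse).Nodup)
    (hnc : NoncrossingList G (List.ofFn a ++ (List.ofFn b).reverse))
    (A B : Finset α) (hA : A = Finset.univ.image a) (hB : B = Finset.univ.image b)
    (hAU : A ⊆ U) (hBV : B ⊆ V)
    (huniq : ∃! m : Finset (Sym2 α), IsPMOn G (Finset.univ \ (A ∪ B)) m) :
    (pmCount G Finset.univ : ℤ) =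
      Matrix.det (Matrix.of fun i j : Fin n =>
        (pmCount G ((Finset.univ \ (A ∪ B)) ∪ {a i, b j}) : ℤ)) := by
  subst hA hB
  have hG : G.IsBipartiteWith (U : Set α) V :=
    ⟨Finset.disjoint_coe.2 hbip.1, fun _ _ hadj => by exact_mod_cast hbip.2.2 hadj⟩
  obtain ⟨ha, hb, -⟩ := List.nodup_append.1 hdist
  obtain ⟨m, hm⟩ := huniq.exists
  obtain ⟨p, q, hlab, hadj, hL⟩ := hm.exists_isBipartiteLabelling hG (List.nodup_ofFn.1 ha)
    (List.nodup_ofFn.1 (List.nodup_reverse.1 hb)) (fun k => hAU (by simp)) (fun k => hBV (by simp))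
    (by simp) (by simp)
  have huniv : ((Finset.univ : Finset α) : Set α) =
      Set.range (Sum.elim p a) ∪ Set.range (Sum.elim q b) := by
    rw [Set.Sum.elim_range, Set.Sum.elim_range, Set.union_union_union_comm, ← hL]
    ext v
    simp
  exact pmCount_eq_det_pmCount hlab hadj hnc.noncrossingTerminals huniv hL huniq
end
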